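/- arXiv:0804.0590 — 2 statements merged into one kernel-verified Lean document; each statement's English description precedes it below -/
import Mathlib

section
/- (Watanabe's Lemma, second part.) Let I be an arithmetically Gorenstein homogeneous ideal of height three in R that is not a complete intersection, let f, g, h ∈ I be a regular sequence of homogeneous elements that can be extended to a minimal generating set of I, and let u be a homogeneous element of R with (f,g,h) : I = (f,g,h,u). Assume furthermore that u, f, g is a regular sequence. Then the ideal I' = (u,f,g) : (f,g,h,u) is an arithmetically Gorenstein homogeneous ideal of height three in R whose minimal number of generators is two less than that of I, i.e., μ(I') = μ(I) − 2. -/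
/-
Common setup: `R = k[x₀,…,xₙ]` is the standard graded polynomial ring
`MvPolynomial (Fin (n+1)) k` over a field `k`.
-/

open CategoryTheory MvPolynomial RingTheory

noncomputable section

variable {k : Type} [Field k] {n : ℕ}

/-- A homogeneous ideal: one generated by homogeneous elements. -/
def IsHomogeneousIdeal (I : Ideal (MvPolynomial (Fin (n+1)) k)) : Prop :=
  ∃ S : Set (MvPolynomial (Fin (n+1)) k),
    (∀ f ∈ S, ∃ d, MvPolynomial.IsHomogeneous f d) ∧ I = Ideal.span S

/-- The height of an ideal: the infimum of the heights of the primes containing it. -/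
def idealHeight (I : Ideal (MvPolynomial (Fin (n+1)) k)) : ℕ∞ :=
  ⨅ (p : PrimeSpectrum (MvPolynomial (Fin (n+1)) k)) (_ : I ≤ p.asIdeal), Order.height p

/-- A complete intersection ideal: one generated by a regular sequence of homogeneous
elements of positive degree. -/
def IsCI (I : Ideal (MvPolynomial (Fin (n+1)) k)) : Prop :=
  ∃ l : List (MvPolynomial (Fin (n+1)) k),
    (∀ f ∈ l, ∃ d, 0 < d ∧ MvPolynomial.IsHomogeneous f d) ∧
    RingTheory.Sequence.IsRegular (MvPolynomial (Fin (n+1)) k) l ∧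
    I = Ideal.span {x | x ∈ l}

/-- Vanishing of `Ext^i_R(R/I, R)`. -/
def extVanishes (I : Ideal (MvPolynomial (Fin (n+1)) k)) (i : ℕ) : Prop :=
  Subsingleton (((Ext (MvPolynomial (Fin (n+1)) k) (ModuleCat (MvPolynomial (Fin (n+1)) k)) i).obj
    (Opposite.op (ModuleCat.of _ (MvPolynomial (Fin (n+1)) k ⧸ I)))).obj
    (ModuleCat.of _ (MvPolynomial (Fin (n+1)) k)))

/-- `Ext^i_R(R/I, R)` is a cyclic `R`-module. -/
def extCyclic (I : Ideal (MvPolynomial (Fin (n+1)) k)) (i : ℕ) : Prop :=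
  ∃ m : (((Ext (MvPolynomial (Fin (n+1)) k) (ModuleCat (MvPolynomial (Fin (n+1)) k)) i).obj
      (Opposite.op (ModuleCat.of _ (MvPolynomial (Fin (n+1)) k ⧸ I)))).obj
      (ModuleCat.of _ (MvPolynomial (Fin (n+1)) k))),
    Submodule.span (MvPolynomial (Fin (n+1)) k) {m} = ⊤

/-- An arithmetically Gorenstein homogeneous ideal of height three: a proper homogeneous
ideal of height 3 with `Ext^i_R(R/I, R) = 0` for `i ≠ 3` and `Ext^3_R(R/I, R)` cyclic. -/
def IsArithGorHt3 (I : Ideal (MvPolynomial (Fin (n+1)) k)) : Prop :=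
  I ≠ ⊤ ∧ IsHomogeneousIdeal I ∧ idealHeight I = 3 ∧
    (∀ i : ℕ, i ≠ 3 → extVanishes I i) ∧ extCyclic I 3

/-- `μ(I)`: the least cardinality of a subset of `R` generating `I`. -/
def mu (I : Ideal (MvPolynomial (Fin (n+1)) k)) : ℕ :=
  sInf {m : ℕ | ∃ S : Finset (MvPolynomial (Fin (n+1)) k),
    S.card = m ∧ Ideal.span (S : Set (MvPolynomial (Fin (n+1)) k)) = I}

/-- `a_i(I)`: the least integer `d` such that `I` contains a regular sequence of `i`
homogeneous elements each of degree at most `d`. -/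
def aDeg (i : ℕ) (I : Ideal (MvPolynomial (Fin (n+1)) k)) : ℕ :=
  sInf {d : ℕ | ∃ l : List (MvPolynomial (Fin (n+1)) k), l.length = i ∧
    (∀ f ∈ l, f ∈ I) ∧ (∀ f ∈ l, ∃ e ≤ d, MvPolynomial.IsHomogeneous f e) ∧
    RingTheory.Sequence.IsRegular (MvPolynomial (Fin (n+1)) k) l}

/-- A minimal complete intersection inside a height-three homogeneous ideal `I`:
a regular sequence `f₁, f₂, f₃` of homogeneous elements of `I` with `deg fⱼ = a_j(I)`. -/
def IsMinCI (I : Ideal (MvPolynomial (Fin (n+1)) k)) (f₁ f₂ f₃ : MvPolynomial (Fin (n+1)) k) :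
    Prop :=
  f₁ ∈ I ∧ f₂ ∈ I ∧ f₃ ∈ I ∧
  MvPolynomial.IsHomogeneous f₁ (aDeg 1 I) ∧ MvPolynomial.IsHomogeneous f₂ (aDeg 2 I) ∧
  MvPolynomial.IsHomogeneous f₃ (aDeg 3 I) ∧
  RingTheory.Sequence.IsRegular (MvPolynomial (Fin (n+1)) k) [f₁, f₂, f₃]

/-
Linkage through `L = (f, g, h, u)`. Duality for a regular sequence `x` of length `c` identifies
`Ext^c(A/J, A)` with `Hom(A/J, A/(x))` for every `J ⊇ (x)`. As `A/I` has projective dimension `3`,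
this gives `I = (f, g, h) : L = (f, g, h) : u` and `Ext⁴(A/L, A) = 0`. Hence `I' = (u, f, g) : h`
has a cyclic `Ext³`, and the short exact sequences `0 → A/(K : x) → A/K → A/(K, x) → 0` for
`(f, g, h), u` and `(u, f, g), h`, which share their last term `A/L`, transfer the projective
dimension from `A/I` to `A/I'`.

For the generators, multiplication by `u` and by `h` identifies both `I/(f, g)` and `I'/(f, g)`
with `((f, g, h) ∩ (u, f, g))/(f, g)`. As `f, g` are part of a minimal generating set of `I`, the
left quotient needs `μ(I) - 2` generators. A diagram chase on the resolution of `A/I` shows that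
`f` and `g` lie in `𝔪 I'`, so the right one needs `μ(I')`.
-/
universe u

section ExtComparison

open Abelian

variable {A : Type u} [CommRing A] {X : ModuleCat.{u} A}

lemma extMk_smul (P : ProjectiveResolution X) {Y : ModuleCat.{u} A} {p m : ℕ}
    (f : P.complex.X p ⟶ Y) (hm : p + 1 = m) (hf : P.complex.d m p ≫ f = 0) (a : A) :
    P.extMk (a • f) m hm (by simp [hf]) = a • P.extMk f m hm hf := by
  rw [Ext.smul_eq_comp_mk₀, P.extMk_comp_mk₀]
  congr 1

/-- The map sending a degree `p + 1` cocycle of `Hom(P, Y)`, where `P` is a projective resolution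
of `X`, to its class in `Ext^{p+1}(X, Y)`. -/
def cocycleToExt (P : ProjectiveResolution X) (Y : ModuleCat.{u} A) (p : ℕ) :
    LinearMap.ker ((P.complex.linearYonedaObj A Y).sc' p (p + 1) (p + 2)).g.hom →ₗ[A]
      Abelian.Ext X Y (p + 1) where
  toFun f := P.extMk f.1 (p + 2) rfl f.2
  map_add' _ _ := (P.add_extMk _ _ _ _ _ _).symm
  map_smul' a f := extMk_smul P f.1 rfl f.2 a

lemma cocycleToExt_surjective (P : ProjectiveResolution X) (Y : ModuleCat.{u} A) (p : ℕ) :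
    Function.Surjective (cocycleToExt P Y p) := fun e =>
  let ⟨f, hf, he⟩ := P.extMk_surjective e (p + 2) rfl
  ⟨⟨f, hf⟩, he⟩

lemma ker_cocycleToExt (P : ProjectiveResolution X) (Y : ModuleCat.{u} A) (p : ℕ) :
    LinearMap.ker (cocycleToExt P Y p) = LinearMap.range
      ((P.complex.linearYonedaObj A Y).sc' p (p + 1) (p + 2)).moduleCatToCycles := by
  ext ⟨f, hf⟩
  rw [LinearMap.mem_ker]
  exact (P.extMk_eq_zero_iff f (p + 2) rfl hf p rfl).trans
    ⟨fun ⟨g, hg⟩ => ⟨g, Subtype.ext hg⟩, fun ⟨g, hg⟩ => ⟨g, congrArg Subtype.val hg⟩⟩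

/-- In positive degrees the derived functor `Ext` agrees with the `Ext` groups of the derived
category. -/
def extEquivAbelianExt (X Y : ModuleCat.{u} A) (p : ℕ) :
    ((_root_.Ext A (ModuleCat.{u} A) (p + 1)).obj (Opposite.op X)).obj Y ≃ₗ[A]
      Abelian.Ext X Y (p + 1) :=
  let P := projectiveResolution X
  let K := P.complex.linearYonedaObj A Y
  (P.isoExt (R := A) (p + 1) Y ≪≫
      ShortComplex.homologyMapIso (K.isoSc' p (p + 1) (p + 2) (by simp) (by simp)) ≪≫
      (K.sc' p (p + 1) (p + 2)).moduleCatHomologyIso).toLinearEquiv ≪≫ₗ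
    Submodule.quotEquivOfEq _ _ (ker_cocycleToExt P Y p).symm ≪≫ₗ
    (cocycleToExt P Y p).quotKerEquivOfSurjective (cocycleToExt_surjective P Y p)

lemma subsingleton_ext_zero_of_forall_hom_eq_zero {X Y : ModuleCat.{u} A}
    (h : ∀ f : X ⟶ Y, f = 0) :
    Subsingleton (((_root_.Ext A (ModuleCat.{u} A) 0).obj (Opposite.op X)).obj Y) := by
  let P := projectiveResolution X
  refine ModuleCat.subsingleton_of_isZero (.of_iso ?_ (P.isoExt (R := A) 0 Y))
  rw [← HomologicalComplex.exactAt_iff_isZero_homology,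
    HomologicalComplex.exactAt_iff' _ 0 0 1 (by simp) (by simp), ShortComplex.moduleCat_exact_iff]
  intro (f : P.complex.X 0 ⟶ Y) (hf : P.complex.d 1 0 ≫ f = 0)
  obtain ⟨g, hg⟩ := P.exact₀.desc' f hf
  have hf0 : f = 0 := by rw [← hg, h g]; exact Limits.comp_zero
  exact ⟨0, (map_zero _).trans hf0.symm⟩

end ExtComparison

section Devissage

open Abelian

variable {A : Type u} [CommRing A]

lemma mk₀_smul_id_comp {X Y : ModuleCat.{u} A} {i : ℕ} (a : A) (e : Abelian.Ext X Y i) :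
    (Ext.mk₀ (a • 𝟙 X)).comp e (zero_add i) = a • e := by
  rw [Ext.mk₀_smul, Ext.smul_comp, Ext.mk₀_id_comp]

lemma subsingleton_ext_of_iso {X X' Y : ModuleCat.{u} A} (e : X ≅ X') {i : ℕ}
    (h : Subsingleton (Abelian.Ext X' Y i)) : Subsingleton (Abelian.Ext X Y i) := by
  refine subsingleton_of_forall_eq 0 fun x => ?_
  calc x = (Ext.mk₀ e.hom).comp ((Ext.mk₀ e.inv).comp x (zero_add i)) (zero_add i) := by simp
    _ = 0 := by rw [Subsingleton.elim ((Ext.mk₀ e.inv).comp x (zero_add i)) 0, Ext.comp_zero]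

lemma subsingleton_ext_X₂ {S : ShortComplex (ModuleCat.{u} A)} (hS : S.ShortExact)
    {Y : ModuleCat.{u} A} {i : ℕ} (h₁ : Subsingleton (Abelian.Ext S.X₁ Y i))
    (h₃ : Subsingleton (Abelian.Ext S.X₃ Y i)) : Subsingleton (Abelian.Ext S.X₂ Y i) := by
  refine subsingleton_of_forall_eq 0 fun x => ?_
  obtain ⟨y, rfl⟩ := Ext.contravariant_sequence_exact₂ hS Y x (Subsingleton.elim _ _)
  rw [Subsingleton.elim y 0, Ext.comp_zero]

lemma exists_smul_eq_of_subsingleton_ext_quotSMulTop {M Y : ModuleCat.{u} A} {x : A}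
    (hx : IsSMulRegular M x) {i : ℕ}
    (h : Subsingleton (Abelian.Ext (ModuleCat.of A (QuotSMulTop x M)) Y (i + 1)))
    (e : Abelian.Ext M Y i) : ∃ e', x • e' = e := by
  obtain ⟨e', he'⟩ := Ext.contravariant_sequence_exact₁ hx.smulShortComplex_shortExact Y e
    (add_comm 1 i) (h.elim _ _)
  exact ⟨e', (mk₀_smul_id_comp x e').symm.trans he'⟩

lemma subsingleton_of_smul_surjective_of_notMem {P : Ideal A} (hP : P.IsPrime)
    (hPmax : ¬ P.IsMaximal) {E : Type*} [AddCommGroup E] [Module A E] [Module.Finite A E]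
    (h : ∀ x ∉ P, ∀ e : E, ∃ e', x • e' = e) : Subsingleton E := by
  obtain ⟨m, hm, hPm⟩ := P.exists_le_maximal hP.ne_top
  obtain ⟨x, hxm, hxP⟩ := SetLike.exists_of_lt
    (lt_of_le_of_ne hPm fun hPm => hPmax (hPm ▸ hm))
  obtain ⟨r, hr, hrE⟩ := Submodule.exists_sub_one_mem_and_smul_eq_zero_of_fg_of_le_smul
    (Ideal.span {x}) (⊤ : Submodule A E) Module.Finite.fg_top fun e _ => by
      obtain ⟨e', rfl⟩ := h x hxP e
      exact Submodule.smul_mem_smul (Ideal.mem_span_singleton_self x) trivial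
  have hrP : r ∉ P := fun hrP => hm.ne_top <| (Ideal.eq_top_iff_one m).2 <| by
    simpa using m.sub_mem (hPm hrP) ((Ideal.span_singleton_le_iff_mem m).2 hxm hr)
  refine subsingleton_of_forall_eq 0 fun e => ?_
  obtain ⟨e', rfl⟩ := h r hrP e
  exact hrE e' trivial

lemma sup_span_singleton_le_annihilator_quotSMulTop (I : Ideal A) (x : A) :
    I ⊔ Ideal.span {x} ≤ Module.annihilator A (QuotSMulTop x (A ⧸ I)) := by
  refine sup_le ?_ ((Ideal.span_singleton_le_iff_mem _).2 (Module.mem_annihilator.2 fun z => ?_))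
  · exact Ideal.annihilator_quotient.symm.le.trans (LinearMap.annihilator_le_of_surjective
      (Submodule.mkQ _) (Submodule.mkQ_surjective _))
  · obtain ⟨z, rfl⟩ := Submodule.Quotient.mk_surjective _ z
    rw [← Submodule.Quotient.mk_smul, Submodule.Quotient.mk_eq_zero]
    exact Submodule.smul_mem_pointwise_smul _ _ _ trivial

variable [IsNoetherianRing A]

lemma subsingleton_ext_of_le_annihilator {Y : ModuleCat.{u} A} {i : ℕ} {J : Ideal A}
    (hJ : ∀ P : Ideal A, P.IsPrime → J ≤ P →
      Subsingleton (Abelian.Ext (ModuleCat.of A (A ⧸ P)) Y i))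
    (M : Type u) [AddCommGroup M] [Module A M] [Module.Finite A M]
    (hM : J ≤ Module.annihilator A M) : Subsingleton (Abelian.Ext (ModuleCat.of A M) Y i) := by
  induction ‹Module.Finite A M› using
    IsNoetherianRing.induction_on_isQuotientEquivQuotientPrime A with
  | subsingleton N =>
    have := (ModuleCat.isZero_of_subsingleton (ModuleCat.of A N)).hasProjectiveDimensionLT_zero
    exact HasProjectiveDimensionLT.subsingleton _ 0 i i.zero_le Y
  | quotient N P e =>
    rw [e.annihilator_eq, Ideal.annihilator_quotient] at hM
    exact subsingleton_ext_of_iso e.toModuleIso (hJ P.1 P.2 hM)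
  | exact N₁ N₂ N₃ f g hf hg hfg h₁ h₃ =>
    exact subsingleton_ext_X₂
      (ModuleCat.shortComplex_shortExact (ShortComplex.mk (ModuleCat.ofHom f) (ModuleCat.ofHom g)
        (ModuleCat.hom_ext hfg.linearMap_comp_eq_zero)) hfg hf hg)
      (h₁ (hM.trans (f.annihilator_le_of_injective hf)))
      (h₃ (hM.trans (g.annihilator_le_of_surjective hg)))

-- For `x ∉ P` all primes containing `P + (x)` are larger than `P`, so by Noetherian induction
-- `Ext^{i+1}` kills the cokernel of `x` on `A ⧸ P` and `x` acts surjectively on `Ext^i(A ⧸ P, Y)`.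
lemma subsingleton_ext_quotient_of_isPrime {Y : ModuleCat.{u} A} [Module.Finite A Y]
    {p : ℕ → Ideal A → Prop}
    (hlt : ∀ i P Q, P.IsPrime → Q.IsPrime → P < Q → p i P → p (i + 1) Q)
    (hmax : ∀ i P, P.IsMaximal → p i P → Subsingleton (Abelian.Ext (ModuleCat.of A (A ⧸ P)) Y i))
    (P : Ideal A) (hP : P.IsPrime) (i : ℕ) (hi : p i P) :
    Subsingleton (Abelian.Ext (ModuleCat.of A (A ⧸ P)) Y i) := by
  induction P using WellFoundedGT.induction generalizing i with
  | ind P ih =>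
  by_cases hPmax : P.IsMaximal
  · exact hmax i P hPmax hi
  refine subsingleton_of_smul_surjective_of_notMem hP hPmax fun x hx => ?_
  have hreg : IsSMulRegular (A ⧸ P) x :=
    (isSMulRegular_quotient_iff_mem_of_smul_mem P x).2 fun _ hy =>
      (hP.mem_or_mem hy).resolve_left hx
  refine exists_smul_eq_of_subsingleton_ext_quotSMulTop hreg
    (subsingleton_ext_of_le_annihilator (fun Q hQ hPQ => ?_) _
      (sup_span_singleton_le_annihilator_quotSMulTop P x))
  have hPQ' : P < Q := lt_of_le_of_ne (le_sup_left.trans hPQ) (by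
    rintro rfl
    exact hx (hPQ (Ideal.mem_sup_right (Ideal.mem_span_singleton_self x))))
  exact ih Q hPQ' hQ (i + 1) (hlt i P Q hP hQ hPQ' hi)

end Devissage

section MaximalIdeals

/-- The ring `A` has all its maximal ideals generated by weakly regular sequences of length `d`. -/
def HasRegularMaximalIdeals (A : Type*) [CommRing A] (d : ℕ) : Prop :=
  ∀ m : Ideal A, m.IsMaximal → ∃ rs : List A, rs.length = d ∧
    Sequence.IsWeaklyRegular A rs ∧ Ideal.ofList rs = m

lemma HasRegularMaximalIdeals.of_ringEquiv {A B : Type*} [CommRing A] [CommRing B] {d : ℕ}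
    (hA : HasRegularMaximalIdeals A d) (e : A ≃+* B) : HasRegularMaximalIdeals B d := by
  intro m hm
  obtain ⟨rs, hlen, hreg, hrs⟩ := hA (m.comap e) (Ideal.comap_isMaximal_of_equiv e)
  refine ⟨rs.map e, by simp [hlen], ?_, ?_⟩
  · let _ := RingHomInvPair.of_ringEquiv e
    let _ := RingHomInvPair.of_ringEquiv e.symm
    simpa using (LinearEquiv.isWeaklyRegular_congr' (σ := (e : A →+* B))
      ({ e with map_smul' := by simp } : A ≃ₛₗ[(e : A →+* B)] B) rs).1 hreg
  · have h := Ideal.map_ofList (e : A →+* B) rs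
    rw [hrs] at h
    exact h.symm.trans (Ideal.map_comap_of_surjective _ e.surjective m)

lemma hasRegularMaximalIdeals_of_field (K : Type*) [Field K] : HasRegularMaximalIdeals K 0 :=
  fun m _ => ⟨[], rfl, .nil _ _, by simp [Ideal.eq_bot_of_prime m]⟩

open Polynomial

lemma ne_map_C_comap_C_of_isMaximal {A : Type*} [CommRing A] {m : Ideal A[X]}
    (hm : m.IsMaximal) : m ≠ (m.comap Polynomial.C).map Polynomial.C := by
  intro h
  have hone : (1 : A) ∉ m.comap Polynomial.C := fun h1 =>
    hm.ne_top ((Ideal.eq_top_iff_one m).2 (by simpa using h1))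
  have hX : (Polynomial.X : A[X]) ∉ m := fun hX => hone <| by
    rw [h, Ideal.mem_map_C_iff] at hX
    simpa using hX 1
  obtain ⟨y, i, hi, hyi⟩ := hm.exists_inv hX
  rw [h, Ideal.mem_map_C_iff] at hi
  have hcoeff : i.coeff 0 = 1 := by simpa using congrArg (Polynomial.coeff · 0) hyi
  exact hone (hcoeff ▸ hi 0)

lemma isSMulRegular_quotient_map_C_of_monic {A : Type*} [CommRing A] (I : Ideal A) {f : A[X]}
    (hf : f.Monic) : IsSMulRegular (A[X] ⧸ I.map Polynomial.C) f := by
  have hker : I.map Polynomial.C = RingHom.ker (Polynomial.mapRingHom (Ideal.Quotient.mk I)) := by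
    rw [Polynomial.ker_mapRingHom, Ideal.mk_ker]
  refine (isSMulRegular_quotient_iff_mem_of_smul_mem _ f).2 fun g hg => ?_
  rw [hker, RingHom.mem_ker] at hg ⊢
  rw [smul_eq_mul, map_mul] at hg
  exact (hf.map (Ideal.Quotient.mk I)).mul_right_eq_zero_iff.1 hg

lemma HasRegularMaximalIdeals.polynomial {A : Type*} [CommRing A] [IsJacobsonRing A] {d : ℕ}
    (hA : HasRegularMaximalIdeals A d) : HasRegularMaximalIdeals A[X] (d + 1) := by
  intro m hm
  have hcomap : (m.comap Polynomial.C).IsMaximal :=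
    Polynomial.isMaximal_comap_C_of_isJacobsonRing (hP := hm) m
  obtain ⟨rs, hlen, hreg, hrs⟩ := hA _ hcomap
  obtain ⟨f, hf, hmf⟩ := Polynomial.exists_monic_span_sup_map_eq A m hcomap
    (ne_map_C_comap_C_of_isMaximal hm)
  have hmap : Ideal.ofList (rs.map (Polynomial.C : A →+* A[X])) =
      (m.comap Polynomial.C).map Polynomial.C := by
    rw [← Ideal.map_ofList, hrs]
  refine ⟨rs.map Polynomial.C ++ [f], by simp [hlen], ?_, ?_⟩
  · rw [Sequence.isWeaklyRegular_append_iff, Sequence.isWeaklyRegular_singleton_iff, hmap,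
      smul_eq_mul, Ideal.mul_top]
    exact ⟨.of_flat (S := A[X]) hreg, isSMulRegular_quotient_map_C_of_monic _ hf⟩
  · rw [Ideal.ofList_append, hmap, Ideal.ofList_singleton]
    exact hmf.symm

lemma hasRegularMaximalIdeals_mvPolynomial (K : Type*) [Field K] (d : ℕ) :
    HasRegularMaximalIdeals (MvPolynomial (Fin d) K) d := by
  induction d with
  | zero =>
    exact (hasRegularMaximalIdeals_of_field K).of_ringEquiv (isEmptyRingEquiv K (Fin 0)).symm
  | succ d ih => exact ih.polynomial.of_ringEquiv (finSuccEquiv K d).symm.toRingEquiv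

end MaximalIdeals

section ProjectiveDimension

open Abelian

variable {A : Type u} [CommRing A]

lemma hasProjectiveDimensionLT_quotient_of_isWeaklyRegular {rs : List A} {M : ModuleCat.{u} A}
    (hrs : Sequence.IsWeaklyRegular M rs) {d : ℕ} (hM : HasProjectiveDimensionLT M d) :
    HasProjectiveDimensionLT (ModuleCat.of A (M ⧸ (Ideal.ofList rs • ⊤ : Submodule A M)))
      (d + rs.length) := by
  induction rs generalizing M d with
  | nil =>
    exact hasProjectiveDimensionLT_of_iso (Submodule.quotEquivOfEqBot _
      (by rw [Ideal.ofList_nil, Submodule.bot_smul])).symm.toModuleIso d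
  | cons r rs ih =>
    rw [Sequence.isWeaklyRegular_cons_iff] at hrs
    have hr : HasProjectiveDimensionLT (ModuleCat.of A (QuotSMulTop r M)) (d + 1) :=
      hrs.1.smulShortComplex_shortExact.hasProjectiveDimensionLT_X₃ d hM
        (hasProjectiveDimensionLT_of_ge M d (d + 1) d.le_succ)
    rw [List.length_cons, Nat.add_comm rs.length, ← Nat.add_assoc]
    have := ih (M := ModuleCat.of A (QuotSMulTop r M)) hrs.2 hr
    exact hasProjectiveDimensionLT_of_iso
      (Submodule.quotOfListConsSMulTopEquivQuotSMulTopInner M r rs).symm.toModuleIso _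

lemma hasProjectiveDimensionLT_quotient_ofList {rs : List A}
    (hrs : Sequence.IsWeaklyRegular A rs) :
    HasProjectiveDimensionLT (ModuleCat.of A (A ⧸ Ideal.ofList rs)) (rs.length + 1) := by
  have hA : HasProjectiveDimensionLT (ModuleCat.of A A) 1 :=
    projective_iff_hasProjectiveDimensionLT_one.1
      (ModuleCat.projective_of_free (Module.Basis.singleton Unit A))
  have := hasProjectiveDimensionLT_quotient_of_isWeaklyRegular (M := ModuleCat.of A A) hrs hA
  have e : (A ⧸ (Ideal.ofList rs • ⊤ : Submodule A A)) ≃ₗ[A] A ⧸ Ideal.ofList rs :=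
    Submodule.quotEquivOfEq _ _ (by rw [smul_eq_mul, Ideal.mul_top])
  rw [Nat.add_comm]
  exact hasProjectiveDimensionLT_of_iso e.toModuleIso _

lemma smul_ext_pi_eq_zero {M : ModuleCat.{u} A} {i m : ℕ} {a : A}
    (ha : ∀ e : Abelian.Ext M (ModuleCat.of A A) i, a • e = 0)
    (e : Abelian.Ext M (ModuleCat.of A (Fin m → A)) i) : a • e = 0 := by
  have hid : 𝟙 (ModuleCat.of A (Fin m → A)) = ∑ j : Fin m,
      ModuleCat.ofHom (LinearMap.proj (R := A) (φ := fun _ : Fin m => A) j) ≫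
      ModuleCat.ofHom (LinearMap.single A (fun _ : Fin m => A) j) := by
    ext i j
    simp [Finset.sum_apply, Pi.single_apply]
  rw [← Ext.comp_mk₀_id e, hid, Ext.mk₀_sum, Ext.comp_sum, Finset.smul_sum]
  refine Finset.sum_eq_zero fun j _ => ?_
  rw [← Ext.mk₀_comp_mk₀, ← Ext.comp_assoc_of_second_deg_zero, ← Ext.smul_comp, ha, Ext.zero_comp]

lemma subsingleton_ext_pi {M : ModuleCat.{u} A} {i : ℕ} (m : ℕ)
    (h : Subsingleton (Abelian.Ext M (ModuleCat.of A A) i)) :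
    Subsingleton (Abelian.Ext M (ModuleCat.of A (Fin m → A)) i) :=
  subsingleton_of_forall_eq 0 fun e => by
    simpa using smul_ext_pi_eq_zero (a := 1) (fun _ => Subsingleton.elim _ _) e

variable [IsNoetherianRing A]

lemma subsingleton_ext_quotient_of_isWeaklyRegular {I : Ideal A} (hI : I ≠ ⊤) {rs : List A}
    (hrs : Sequence.IsWeaklyRegular A rs) (hrsI : Ideal.ofList rs ≤ I) {i : ℕ}
    (hi : i < rs.length) :
    Subsingleton (Abelian.Ext (ModuleCat.of A (A ⧸ I)) (ModuleCat.of A A) i) := by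
  have hI' : I • (⊤ : Submodule A A) < ⊤ := by
    rw [smul_eq_mul, Ideal.mul_top]
    exact hI.lt_top
  refine ModuleCat.subsingleton_ext_of_exists_isRegular I (ModuleCat.of A (A ⧸ I)) ?_
    (ModuleCat.of A A) hI' rs (fun r hr => hrsI (Ideal.subset_span hr))
    ⟨hrs, ((Submodule.smul_mono_left hrsI).trans_lt hI').ne'⟩ i hi
  rw [Module.support_eq_zeroLocus, Ideal.annihilator_quotient]

lemma hasProjectiveDimensionLT_of_subsingleton_ext {M : ModuleCat.{u} A} [Module.Finite A M]
    {c N : ℕ} (hN : HasProjectiveDimensionLT M N)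
    (h : ∀ i, c ≤ i → Subsingleton (Abelian.Ext M (ModuleCat.of A A) i)) :
    HasProjectiveDimensionLT M c := by
  induction N with
  | zero => exact hasProjectiveDimensionLT_of_ge M 0 c c.zero_le
  | succ N ih =>
    obtain hNc | hcN := Nat.lt_or_ge N c
    · exact hasProjectiveDimensionLT_of_ge M (N + 1) c hNc
    refine ih (ModuleCat.hasProjectiveDimensionLT_of_forall_finite M _ fun L _ => ?_)
    obtain ⟨m, f, hf⟩ := Module.Finite.exists_fin' A L
    refine subsingleton_of_forall_eq 0 fun x => ?_
    obtain ⟨y, rfl⟩ := Ext.covariant_sequence_exact₃ M (LinearMap.shortExact_shortComplexKer hf)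
      x rfl (Ext.eq_zero_of_hasProjectiveDimensionLT _ (N + 1) le_rfl)
    have : Subsingleton (Abelian.Ext M f.shortComplexKer.X₂ N) := subsingleton_ext_pi m (h N hcN)
    rw [Subsingleton.elim y 0, Ext.zero_comp]

lemma smul_ext_eq_zero_of_hasProjectiveDimensionLT {M : ModuleCat.{u} A} {c : ℕ}
    (hM : HasProjectiveDimensionLT M (c + 1))
    (hlt : ∀ i < c, Subsingleton (Abelian.Ext M (ModuleCat.of A A) i)) {a : A}
    (ha : ∀ e : Abelian.Ext M (ModuleCat.of A A) c, a • e = 0) {i : ℕ} (hi : i ≤ c)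
    (L : ModuleCat.{u} A) [Module.Finite A L] (e : Abelian.Ext M L i) : a • e = 0 := by
  obtain ⟨m, f, hf⟩ := Module.Finite.exists_fin' A L
  have hS := LinearMap.shortExact_shortComplexKer hf
  induction hi using Nat.decreasingInduction generalizing L m with
  | self =>
    obtain ⟨y, rfl⟩ := Ext.covariant_sequence_exact₃ M hS e rfl
      (Ext.eq_zero_of_hasProjectiveDimensionLT _ (c + 1) le_rfl)
    have hy : a • y = 0 := smul_ext_pi_eq_zero ha y
    rw [← Ext.smul_comp, hy, Ext.zero_comp]
  | of_succ j hj ih =>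
    have hker : Module.Finite A (f.shortComplexKer).X₁ := inferInstanceAs
      (Module.Finite A (LinearMap.ker f))
    obtain ⟨m', f', hf'⟩ := Module.Finite.exists_fin' A (f.shortComplexKer).X₁
    obtain ⟨y, hy⟩ := Ext.covariant_sequence_exact₃ M hS (a • e) rfl <| by
      rw [Ext.smul_comp, ih _ _ m' f' hf' (LinearMap.shortExact_shortComplexKer hf')]
    have : Subsingleton (Abelian.Ext M f.shortComplexKer.X₂ j) := subsingleton_ext_pi m (hlt j hj)
    rw [← hy, Subsingleton.elim y 0, Ext.zero_comp]

lemma mem_annihilator_of_smul_ext_eq_zero {M : ModuleCat.{u} A} [Module.Finite A M] {c : ℕ}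
    (hM : HasProjectiveDimensionLT M (c + 1))
    (hlt : ∀ i < c, Subsingleton (Abelian.Ext M (ModuleCat.of A A) i)) {a : A}
    (ha : ∀ e : Abelian.Ext M (ModuleCat.of A A) c, a • e = 0) : a ∈ Module.annihilator A M := by
  have h : Ext.mk₀ (a • 𝟙 M) = 0 := by
    rw [Ext.mk₀_smul]
    exact smul_ext_eq_zero_of_hasProjectiveDimensionLT hM hlt ha c.zero_le M _
  rw [Ext.mk₀_eq_zero_iff] at h
  exact Module.mem_annihilator.2 fun x => congrArg (fun f : M ⟶ M => f x) h

end ProjectiveDimension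

section HilbertSyzygy

open Abelian

variable {K : Type u} [Field K] {d : ℕ}

local notation "S" => MvPolynomial (Fin d) K

theorem hasProjectiveDimensionLT_mvPolynomial (M : ModuleCat.{u} S) [Module.Finite S M] :
    HasProjectiveDimensionLT M (d + 1) := by
  refine ModuleCat.hasProjectiveDimensionLT_of_forall_finite M _ fun L _ =>
    subsingleton_ext_of_le_annihilator (J := ⊥) (fun P hP _ => ?_) M bot_le
  refine subsingleton_ext_quotient_of_isPrime (p := fun i _ => d + 1 ≤ i)
    (fun i _ _ _ _ _ h => Nat.le_succ_of_le h) (fun i m hm hi => ?_) P hP (d + 1) le_rfl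
  obtain ⟨rs, hlen, hreg, rfl⟩ := hasRegularMaximalIdeals_mvPolynomial K d m hm
  have := hasProjectiveDimensionLT_quotient_ofList hreg
  exact HasProjectiveDimensionLT.subsingleton _ (rs.length + 1) i (by omega) _

theorem subsingleton_ext_quotient_of_lt_height {J : Ideal S} {i : ℕ}
    (hJ : ∀ P : Ideal S, P.IsPrime → J ≤ P → i < P.height) :
    Subsingleton (Abelian.Ext (ModuleCat.of S (S ⧸ J)) (ModuleCat.of S S) i) := by
  refine subsingleton_ext_of_le_annihilator (fun P hP hJP => ?_) _ Ideal.annihilator_quotient.ge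
  refine subsingleton_ext_quotient_of_isPrime (p := fun i P => i < P.height)
    (fun i P Q hP hQ hlt h => ?_) (fun i m hm hi => ?_) P hP i (hJ P hP hJP)
  · rw [Nat.cast_succ]
    exact ((ENat.add_lt_add_iff_right ENat.one_ne_top).2 h).trans_le
      (Ideal.height_add_one_le_of_lt_of_isPrime hlt)
  · obtain ⟨rs, hlen, hreg, hrs⟩ := hasRegularMaximalIdeals_mvPolynomial K d m hm
    have hle : m.height ≤ d := WithBot.coe_le_coe.1 <|
      (Ideal.height_le_ringKrullDim_of_ne_top hm.ne_top).trans
        (by simp [MvPolynomial.ringKrullDim_of_isNoetherianRing])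
    exact subsingleton_ext_quotient_of_isWeaklyRegular hm.ne_top hreg hrs.le
      ((Nat.cast_lt.1 (hi.trans_le hle)).trans_eq hlen.symm)

end HilbertSyzygy

section Linkage

open Abelian

variable {A : Type u} [CommRing A]

lemma exists_fundamentalClass {rs : List A} {Y : ModuleCat.{u} A}
    (hrs : Sequence.IsWeaklyRegular Y rs) :
    ∃ θ : Abelian.Ext (ModuleCat.of A (Y ⧸ (Ideal.ofList rs • ⊤ : Submodule A Y))) Y rs.length,
      ∀ (M : ModuleCat.{u} A), Ideal.ofList rs ≤ Module.annihilator A M →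
        ∀ e : Abelian.Ext M Y rs.length, ∃ φ, (Ext.mk₀ φ).comp θ (zero_add _) = e := by
  induction rs generalizing Y with
  | nil =>
    let i : ModuleCat.of A (Y ⧸ (Ideal.ofList ([] : List A) • ⊤ : Submodule A Y)) ≅ Y :=
      (Submodule.quotEquivOfEqBot _ (by rw [Ideal.ofList_nil, Submodule.bot_smul])).toModuleIso
    refine ⟨Ext.mk₀ i.hom, fun M _ e => ?_⟩
    obtain ⟨ψ, rfl⟩ := (Ext.mk₀_bijective M Y).2 e
    exact ⟨ψ ≫ i.inv, by simp⟩
  | cons r rs ih =>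
    rw [Sequence.isWeaklyRegular_cons_iff] at hrs
    have hS := hrs.1.smulShortComplex_shortExact
    obtain ⟨θ, hθ⟩ := ih (Y := ModuleCat.of A (QuotSMulTop r Y)) hrs.2
    let i := (Submodule.quotOfListConsSMulTopEquivQuotSMulTopInner Y r rs).toModuleIso
    refine ⟨(Ext.mk₀ i.hom).comp (θ.comp hS.extClass rfl) (zero_add _), fun M hM e => ?_⟩
    rw [Ideal.ofList_cons, sup_le_iff, Ideal.span_singleton_le_iff_mem] at hM
    have hr : r • 𝟙 M = 0 := by
      ext m
      exact Module.mem_annihilator.1 hM.1 m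
    have hre : e.comp (Ext.mk₀ (r • 𝟙 Y)) (add_zero _) = 0 := by
      rw [Ext.mk₀_smul, Ext.comp_smul, Ext.comp_mk₀_id, ← mk₀_smul_id_comp, hr, Ext.mk₀_zero,
        Ext.zero_comp]
    obtain ⟨e', rfl⟩ := Ext.covariant_sequence_exact₁ M hS e hre (n₀ := rs.length) rfl
    obtain ⟨φ, rfl⟩ := hθ M hM.2 e'
    refine ⟨φ ≫ i.inv, (Ext.mk₀_comp_mk₀_assoc _ _ _).trans ?_⟩
    rw [Category.assoc, Iso.inv_hom_id, Category.comp_id]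
    exact (Ext.comp_assoc _ _ _ _ _ (by simp)).symm

variable {I K : Ideal A}

/-- Multiplication by an element `c` of `K : I`, as a linear map from `A ⧸ I` to `A ⧸ K`. -/
def quotientMul (c : A) (hc : c ∈ K.colon (I : Set A)) : (A ⧸ I) →ₗ[A] A ⧸ K :=
  I.mapQ K (LinearMap.lsmul A A c) (Submodule.mem_colon.1 hc)

lemma quotientMul_mk (c : A) (hc : c ∈ K.colon (I : Set A)) (a : A) :
    quotientMul c hc (Submodule.Quotient.mk a) = Submodule.Quotient.mk (c * a) := rfl

lemma quotientMul_eq_smul_of_sub_mem {c u a : A} (hc : c ∈ K.colon (I : Set A))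
    (hu : u ∈ K.colon (I : Set A)) (h : c - a * u ∈ K) :
    quotientMul c hc = a • quotientMul u hu := by
  refine Submodule.linearMap_qext I (LinearMap.ext_ring ((Submodule.Quotient.eq K).2 ?_))
  simpa [mul_one] using h

lemma exists_eq_quotientMul (φ : (A ⧸ I) →ₗ[A] A ⧸ K) : ∃ c hc, φ = quotientMul c hc := by
  obtain ⟨c, hc⟩ := Submodule.Quotient.mk_surjective K (φ (Submodule.Quotient.mk 1))
  have hφ (a : A) : φ (Submodule.Quotient.mk a) = Submodule.Quotient.mk (c * a) := by
    rw [mul_comm, ← smul_eq_mul, Submodule.Quotient.mk_smul, hc, ← map_smul,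
      ← Submodule.Quotient.mk_smul, smul_eq_mul, mul_one]
  refine ⟨c, Submodule.mem_colon.2 fun a ha => ?_, Submodule.linearMap_qext I (LinearMap.ext hφ)⟩
  rw [smul_eq_mul, ← Submodule.Quotient.mk_eq_zero, ← hφ, (Submodule.Quotient.mk_eq_zero I).2 ha,
    map_zero]

variable {rs : List A}

lemma exists_quotientMul_comp_eq (hrs : Sequence.IsWeaklyRegular A rs) :
    ∃ θ : Abelian.Ext (ModuleCat.of A (A ⧸ Ideal.ofList rs)) (ModuleCat.of A A) rs.length,
      ∀ I : Ideal A, Ideal.ofList rs ≤ I →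
        ∀ e : Abelian.Ext (ModuleCat.of A (A ⧸ I)) (ModuleCat.of A A) rs.length,
          ∃ c hc, (Ext.mk₀ (ModuleCat.ofHom (quotientMul c hc))).comp θ (zero_add _) = e := by
  have hθ := exists_fundamentalClass (Y := ModuleCat.of A A) hrs
  rw [show (Ideal.ofList rs • ⊤ : Submodule A A) = Ideal.ofList rs by simp] at hθ
  obtain ⟨θ, hθ⟩ := hθ
  refine ⟨θ, fun I hI e => ?_⟩
  obtain ⟨φ, hφ⟩ := hθ (ModuleCat.of A (A ⧸ I)) (hI.trans Ideal.annihilator_quotient.ge) e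
  obtain ⟨c, hc, hcφ⟩ := exists_eq_quotientMul φ.hom
  exact ⟨c, hc, by rw [← hcφ]; exact hφ⟩

lemma exists_smul_quotientMul_comp_eq (hrs : Sequence.IsWeaklyRegular A rs)
    (hI : Ideal.ofList rs ≤ I) {u : A} (hu : u ∈ (Ideal.ofList rs).colon (I : Set A))
    (hcolon : (Ideal.ofList rs).colon (I : Set A) ≤ Ideal.ofList rs ⊔ Ideal.span {u}) :
    ∃ θ, ∀ e : Abelian.Ext (ModuleCat.of A (A ⧸ I)) (ModuleCat.of A A) rs.length, ∃ a : A,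
      a • (Ext.mk₀ (ModuleCat.ofHom (quotientMul u hu))).comp θ (zero_add _) = e := by
  obtain ⟨θ, hθ⟩ := exists_quotientMul_comp_eq hrs
  refine ⟨θ, fun e => ?_⟩
  obtain ⟨c, hc, rfl⟩ := hθ I hI e
  obtain ⟨x, hx, y, hy, rfl⟩ := Submodule.mem_sup.1 (hcolon hc)
  obtain ⟨a, rfl⟩ := Ideal.mem_span_singleton'.1 hy
  have h : quotientMul (x + a * u) hc = a • quotientMul u hu :=
    quotientMul_eq_smul_of_sub_mem hc hu (by simpa using hx)
  refine ⟨a, ?_⟩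
  rw [h, ← Ext.smul_comp, ← Ext.mk₀_smul]
  rfl

lemma colon_colon_eq_self [IsNoetherianRing A] (hrs : Sequence.IsWeaklyRegular A rs)
    (hI : Ideal.ofList rs ≤ I)
    (hpd : HasProjectiveDimensionLT (ModuleCat.of A (A ⧸ I)) (rs.length + 1))
    (hlt : ∀ i < rs.length,
      Subsingleton (Abelian.Ext (ModuleCat.of A (A ⧸ I)) (ModuleCat.of A A) i)) :
    (Ideal.ofList rs).colon ((Ideal.ofList rs).colon (I : Set A) : Set A) = I := by
  refine le_antisymm (fun a ha => ?_) fun a ha => Submodule.mem_colon.2 fun c hc => ?_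
  · rw [← Ideal.annihilator_quotient (I := I)]
    refine mem_annihilator_of_smul_ext_eq_zero (M := ModuleCat.of A (A ⧸ I)) hpd hlt fun e => ?_
    obtain ⟨θ, hθ⟩ := exists_quotientMul_comp_eq hrs
    obtain ⟨c, hc, rfl⟩ := hθ I hI e
    have h : a • quotientMul c hc = 0 := by
      refine Submodule.linearMap_qext I (LinearMap.ext_ring ?_)
      exact (Submodule.Quotient.mk_eq_zero _).2 (by simpa using Submodule.mem_colon.1 ha c hc)
    have h' : a • ModuleCat.ofHom (quotientMul c hc) = 0 := congrArg ModuleCat.ofHom h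
    rw [← Ext.smul_comp, ← Ext.mk₀_smul, h', Ext.mk₀_zero, Ext.zero_comp]
  · rw [smul_eq_mul, mul_comm, ← smul_eq_mul]
    exact Submodule.mem_colon.1 hc a ha

lemma mem_colon_colon_singleton (K : Ideal A) (x : A) : x ∈ K.colon (K.colon {x} : Set A) :=
  Submodule.mem_colon.2 fun a ha => by
    simpa [mul_comm] using ha

/-- The sequence `A ⧸ (K : x) → A ⧸ K → A ⧸ (K + (x))`, the first map being multiplication
by `x`. -/
abbrev colonSequence (K : Ideal A) (x : A) : ShortComplex (ModuleCat.{u} A) where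
  X₁ := ModuleCat.of A (A ⧸ K.colon {x})
  X₂ := ModuleCat.of A (A ⧸ K)
  X₃ := ModuleCat.of A (A ⧸ K ⊔ Ideal.span {x})
  f := ModuleCat.ofHom (quotientMul x (mem_colon_colon_singleton K x))
  g := ModuleCat.ofHom (Submodule.factor le_sup_left)
  zero := by
    refine ModuleCat.hom_ext (Submodule.linearMap_qext _ (LinearMap.ext_ring ?_))
    refine (Submodule.Quotient.mk_eq_zero _).2 (Ideal.mem_sup_right ?_)
    simp

lemma colonSequence_shortExact (K : Ideal A) (x : A) : (colonSequence K x).ShortExact := by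
  refine ModuleCat.shortComplex_shortExact _ ?_ ?_ (Submodule.factor_surjective le_sup_left)
  · intro y
    obtain ⟨y, rfl⟩ := Submodule.Quotient.mk_surjective _ y
    refine (Submodule.Quotient.mk_eq_zero (x := y) (K ⊔ Ideal.span {x})).trans ?_
    rw [Submodule.mem_sup]
    constructor
    · rintro ⟨b, hb, z, hz, rfl⟩
      obtain ⟨c, rfl⟩ := Ideal.mem_span_singleton'.1 hz
      refine ⟨Submodule.Quotient.mk c, (Submodule.Quotient.eq K).2 ?_⟩
      simpa [mul_comm] using hb
    · rintro ⟨c, hc⟩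
      obtain ⟨c, rfl⟩ := Submodule.Quotient.mk_surjective _ c
      have hcy : x * c - y ∈ K := (Submodule.Quotient.eq K).1 hc
      exact ⟨y - x * c, by simpa using K.neg_mem hcy, x * c,
        Ideal.mul_mem_right c _ (Ideal.mem_span_singleton_self x), by ring⟩
  · refine (injective_iff_map_eq_zero (quotientMul x (mem_colon_colon_singleton K x))).2 ?_
    intro a ha
    obtain ⟨a, rfl⟩ := Submodule.Quotient.mk_surjective _ a
    rw [quotientMul_mk, Submodule.Quotient.mk_eq_zero, mul_comm] at ha
    exact (Submodule.Quotient.mk_eq_zero _).2 (Submodule.mem_colon_singleton.2 ha)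

lemma subsingleton_ext_quotient_sup_span_singleton (hrs : Sequence.IsWeaklyRegular A rs) {u : A}
    (hcolon : (Ideal.ofList rs).colon ((Ideal.ofList rs).colon {u} : Set A) =
      Ideal.ofList rs ⊔ Ideal.span {u}) :
    Subsingleton (Abelian.Ext (ModuleCat.of A (A ⧸ Ideal.ofList rs ⊔ Ideal.span {u}))
      (ModuleCat.of A A) (rs.length + 1)) := by
  have hS := colonSequence_shortExact (Ideal.ofList rs) u
  obtain ⟨θ, hθ⟩ := exists_smul_quotientMul_comp_eq hrs Ideal.le_colon
    (mem_colon_colon_singleton _ u) hcolon.le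
  have := hasProjectiveDimensionLT_quotient_ofList hrs
  refine subsingleton_of_forall_eq 0 fun x => ?_
  obtain ⟨e, rfl⟩ := Ext.contravariant_sequence_exact₃ hS (ModuleCat.of A A) x
    ((HasProjectiveDimensionLT.subsingleton _ (rs.length + 1) _ le_rfl _).elim _ _) (add_comm _ _)
  obtain ⟨a, rfl⟩ := hθ e
  have h : hS.extClass.comp ((Ext.mk₀ (colonSequence (Ideal.ofList rs) u).f).comp θ (zero_add _))
      (add_comm _ _) = 0 := by
    rw [← Ext.comp_assoc_of_second_deg_zero, hS.extClass_comp, Ext.zero_comp]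
  exact (Ext.comp_smul ..).trans ((congrArg (a • ·) h).trans (smul_zero a))

lemma exists_forall_ext_quotient_colon_eq_smul (hrs : Sequence.IsWeaklyRegular A rs) {x : A}
    (h : Subsingleton (Abelian.Ext (ModuleCat.of A (A ⧸ Ideal.ofList rs ⊔ Ideal.span {x}))
      (ModuleCat.of A A) (rs.length + 1))) :
    ∃ e₀ : Abelian.Ext (ModuleCat.of A (A ⧸ (Ideal.ofList rs).colon {x})) (ModuleCat.of A A)
      rs.length, ∀ e, ∃ a : A, a • e₀ = e := by
  have hS := colonSequence_shortExact (Ideal.ofList rs) x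
  have h1 : 1 ∈ (Ideal.ofList rs).colon (Ideal.ofList rs : Set A) :=
    Submodule.mem_colon.2 fun a ha => by rwa [one_smul]
  obtain ⟨θ, hθ⟩ := exists_smul_quotientMul_comp_eq hrs le_rfl h1 (by simp)
  refine ⟨(Ext.mk₀ (colonSequence (Ideal.ofList rs) x).f).comp
    ((Ext.mk₀ (ModuleCat.ofHom (quotientMul 1 h1))).comp θ (zero_add _)) (zero_add _), fun e => ?_⟩
  obtain ⟨e', rfl⟩ := Ext.contravariant_sequence_exact₁ hS (ModuleCat.of A A) e (add_comm _ _)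
    (h.elim _ _)
  obtain ⟨a, rfl⟩ := hθ e'
  exact ⟨a, (Ext.comp_smul ..).symm⟩

end Linkage

section Height

open Abelian

lemma length_le_height_of_isWeaklyRegular {A : Type*} [CommRing A] [IsNoetherianRing A]
    {rs : List A} (hrs : Sequence.IsWeaklyRegular A rs) {P : Ideal A} [P.IsPrime]
    (hP : Ideal.ofList rs ≤ P) : rs.length ≤ P.height := by
  have hloc := hrs.isRegular_of_isLocalization_of_mem (Localization.AtPrime P) P
    fun r hr => hP (Ideal.subset_span hr)
  have hdim := ringKrullDim_add_length_eq_ringKrullDim_of_isRegular _ hloc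
  rw [IsLocalization.AtPrime.ringKrullDim_eq_height P (Localization.AtPrime P),
    List.length_map] at hdim
  have : Nontrivial (Localization.AtPrime P ⧸
      Ideal.ofList (rs.map (algebraMap A (Localization.AtPrime P)))) :=
    Ideal.Quotient.nontrivial_iff.2 fun h => hloc.2 (by rw [h, smul_eq_mul, Ideal.mul_top])
  exact_mod_cast (le_add_of_nonneg_left ringKrullDim_nonneg_of_nontrivial).trans_eq hdim

variable {K : Type u} [Field K] {d : ℕ}

local notation "S" => MvPolynomial (Fin d) K

lemma height_le_of_hasProjectiveDimensionLT_quotient {c : ℕ} {J : Ideal S} (hJ : J ≠ ⊤)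
    (hpd : HasProjectiveDimensionLT (ModuleCat.of S (S ⧸ J)) (c + 1)) :
    J.height ≤ c := by
  by_contra! hc
  have hvan {i : ℕ} (hi : i ≤ c) :
      Subsingleton (Abelian.Ext (ModuleCat.of S (S ⧸ J))
        (ModuleCat.of S S) i) :=
    subsingleton_ext_quotient_of_lt_height fun P _ hJP =>
      (Nat.cast_le.2 hi).trans_lt (hc.trans_le (Ideal.height_mono hJP))
  have h1 := mem_annihilator_of_smul_ext_eq_zero (a := 1)
    (M := ModuleCat.of S (S ⧸ J)) hpd (fun i hi => hvan hi.le)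
    fun e => (hvan le_rfl).elim _ _
  exact hJ ((Ideal.eq_top_iff_one J).2 (Ideal.annihilator_quotient.le h1))

lemma idealHeight_eq_height (I : Ideal (MvPolynomial (Fin (n + 1)) k)) :
    idealHeight I = I.height := by
  refine le_antisymm ?_ (le_iInf₂ fun p hp => ?_)
  · rw [Ideal.height_eq_inf_minimalPrimes]
    refine le_iInf₂ fun P hP => ?_
    have := hP.1.1
    exact (iInf₂_le (⟨P, hP.1.1⟩ : PrimeSpectrum _) hP.1.2).trans_eq
      (PrimeSpectrum.height_eq_orderHeight _).symm
  · rw [← PrimeSpectrum.height_eq_orderHeight]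
    exact Ideal.height_mono hp

end Height

section ArithGor

open Abelian

local notation "R" => MvPolynomial (Fin (n + 1)) k

lemma IsArithGorHt3.hasProjectiveDimensionLT_quotient {I : Ideal R} (hI : IsArithGorHt3 I) :
    HasProjectiveDimensionLT (ModuleCat.of R (R ⧸ I)) 4 := by
  refine hasProjectiveDimensionLT_of_subsingleton_ext (hasProjectiveDimensionLT_mvPolynomial _)
    fun i hi => ?_
  obtain ⟨j, rfl⟩ := Nat.exists_eq_succ_of_ne_zero (by omega : i ≠ 0)
  have : Subsingleton _ := hI.2.2.2.1 (j + 1) (by omega)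
  exact (extEquivAbelianExt _ _ j).symm.toEquiv.subsingleton

lemma isArithGorHt3_of_forall_eq_smul {I : Ideal R} (hI : I ≠ ⊤) (hhom : IsHomogeneousIdeal I)
    {rs : List R} (hrs : Sequence.IsWeaklyRegular R rs)
    (hlen : rs.length = 3) (hrsI : Ideal.ofList rs ≤ I)
    (hpd : HasProjectiveDimensionLT (ModuleCat.of R (R ⧸ I)) 4)
    {e₀ : Abelian.Ext (ModuleCat.of R (R ⧸ I))
      (ModuleCat.of R R) 3}
    (he₀ : ∀ e, ∃ a : R, a • e₀ = e) : IsArithGorHt3 I := by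
  refine ⟨hI, hhom, ?_, fun i hi => ?_, (extEquivAbelianExt _ _ 2).symm e₀, ?_⟩
  · rw [idealHeight_eq_height]
    refine le_antisymm (height_le_of_hasProjectiveDimensionLT_quotient hI hpd) ?_
    rw [Ideal.height_eq_inf_minimalPrimes]
    refine le_iInf₂ fun P hP => ?_
    have := hP.1.1
    simpa [hlen] using length_le_height_of_isWeaklyRegular hrs (hrsI.trans hP.1.2)
  · have hvan : Subsingleton (Abelian.Ext (ModuleCat.of R (R ⧸ I))
        (ModuleCat.of R R) i) := by
      obtain hlt | hgt := lt_or_gt_of_ne hi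
      · exact subsingleton_ext_quotient_of_isWeaklyRegular hI hrs hrsI (hlt.trans_eq hlen.symm)
      · exact HasProjectiveDimensionLT.subsingleton _ 4 i hgt _
    cases i with
    | zero =>
      exact subsingleton_ext_zero_of_forall_hom_eq_zero fun φ =>
        (Ext.mk₀_bijective _ _).1 (Subsingleton.elim _ _)
    | succ j => exact (extEquivAbelianExt _ _ j).toEquiv.subsingleton
  · refine Submodule.eq_top_iff'.2 fun x => Submodule.mem_span_singleton.2 ?_
    obtain ⟨a, ha⟩ := he₀ (extEquivAbelianExt _ _ 2 x)
    exact ⟨a, by rw [← map_smul, ha, LinearEquiv.symm_apply_apply]⟩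

end ArithGor

section Resolution

variable {A : Type u} [CommRing A] {F₁ F₂ : Type u} [AddCommGroup F₁] [Module A F₁]
  [AddCommGroup F₂] [Module A F₂]

lemma mem_colon_smul_top_of_forall_smul_mem {P : Type*} [AddCommGroup P] [Module A P]
    [Module.Projective A P] {K I : Ideal A} {ω : P}
    (h : ∀ s ∈ I, s • ω ∈ K • (⊤ : Submodule A P)) :
    ω ∈ K.colon (I : Set A) • (⊤ : Submodule A P) := by
  obtain ⟨σ, hσ⟩ := Module.Projective.out (R := A) (P := P)
  rw [← hσ ω, Finsupp.linearCombination_apply, Finsupp.sum]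
  refine Submodule.sum_mem _ fun p _ => Submodule.smul_mem_smul (Submodule.mem_colon.2 ?_) trivial
  intro s hs
  have hmem := Submodule.mem_map_of_mem (f := Finsupp.lapply p ∘ₗ σ) (h s hs)
  rw [Submodule.map_smul''] at hmem
  simpa [mul_comm] using Ideal.mul_le_left hmem

lemma exists_forall_mem_ker_apply_eq_smul [Module.Projective A F₁] {d₁ : F₁ →ₗ[A] A}
    {d₂ : F₂ →ₗ[A] F₁} (hd : Function.Exact d₂ d₁) {s : A} (hs : s ∈ LinearMap.range d₁) :
    ∃ η : F₂ →ₗ[A] LinearMap.ker d₂, ∀ y : LinearMap.ker d₂, η y = s • y := by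
  obtain ⟨x, rfl⟩ := hs
  let ψ : F₁ →ₗ[A] LinearMap.range d₂ :=
    (d₁ x • LinearMap.id - (LinearMap.toSpanSingleton A F₁ x) ∘ₗ d₁).codRestrict _ fun z =>
      (hd _).1 (by simp [mul_comm])
  obtain ⟨τ, hτ⟩ := Module.projective_lifting_property d₂.rangeRestrict ψ
    d₂.surjective_rangeRestrict
  have hdτ (z : F₁) : d₂ (τ z) = d₁ x • z - d₁ z • x :=
    congrArg Subtype.val (LinearMap.congr_fun hτ z)
  refine ⟨(d₁ x • LinearMap.id - τ ∘ₗ d₂).codRestrict _ fun y => ?_, fun y => Subtype.ext ?_⟩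
  · simp
  · rw [LinearMap.mem_ker, LinearMap.sub_apply, map_sub, LinearMap.comp_apply, hdτ,
      hd.apply_apply_eq_zero]
    simp

lemma hasProjectiveDimensionLT_ker {M N : Type u} [AddCommGroup M] [Module A M] [AddCommGroup N]
    [Module A N] [Module.Projective A M] {f : M →ₗ[A] N} (hf : Function.Surjective f) {c : ℕ}
    (h : HasProjectiveDimensionLT (ModuleCat.of A N) (c + 2)) :
    HasProjectiveDimensionLT (ModuleCat.of A (LinearMap.ker f)) (c + 1) :=
  ((LinearMap.shortExact_shortComplexKer hf).hasProjectiveDimensionLT_X₃_iff c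
    ((IsProjective.iff_projective M).1 inferInstance)).1 h

lemma projective_ker_of_hasProjectiveDimensionLT [Module.Projective A F₁] [Module.Projective A F₂]
    {d₁ : F₁ →ₗ[A] A} {d₂ : F₂ →ₗ[A] F₁} (hd : Function.Exact d₂ d₁)
    (hpd : HasProjectiveDimensionLT (ModuleCat.of A (A ⧸ LinearMap.range d₁)) 4) :
    Module.Projective A (LinearMap.ker d₂) := by
  have h₁ := hasProjectiveDimensionLT_ker (Submodule.mkQ_surjective (LinearMap.range d₁)) hpd
  rw [Submodule.ker_mkQ] at h₁
  have h₂ := hasProjectiveDimensionLT_ker d₁.surjective_rangeRestrict h₁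
  rw [LinearMap.ker_rangeRestrict, hd.linearMap_ker_eq] at h₂
  have h₃ := hasProjectiveDimensionLT_ker d₂.surjective_rangeRestrict h₂
  rw [LinearMap.ker_rangeRestrict] at h₃
  exact (IsProjective.iff_projective _).2 (projective_iff_hasProjectiveDimensionLT_one.2 h₃)

lemma smul_top_inf_ker_le_colon_smul_ker [Module.Projective A F₁] [Module.Projective A F₂]
    {d₁ : F₁ →ₗ[A] A} {d₂ : F₂ →ₗ[A] F₁} (hd : Function.Exact d₂ d₁)
    (hpd : HasProjectiveDimensionLT (ModuleCat.of A (A ⧸ LinearMap.range d₁)) 4) (K : Ideal A) :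
    K • ⊤ ⊓ LinearMap.ker d₂ ≤ K.colon (LinearMap.range d₁ : Set A) • LinearMap.ker d₂ := by
  rintro ω ⟨hωK, hω⟩
  have := projective_ker_of_hasProjectiveDimensionLT hd hpd
  have h : (⟨ω, hω⟩ : LinearMap.ker d₂) ∈ K.colon (LinearMap.range d₁ : Set A) •
      (⊤ : Submodule A (LinearMap.ker d₂)) := by
    refine mem_colon_smul_top_of_forall_smul_mem fun s hs => ?_
    obtain ⟨η, hη⟩ := exists_forall_mem_ker_apply_eq_smul hd hs
    rw [← hη]
    have hηω := Submodule.mem_map_of_mem (f := η) hωK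
    rw [Submodule.map_smul''] at hηω
    exact Submodule.smul_mono le_rfl le_top hηω
  have h' := Submodule.mem_map_of_mem (f := (LinearMap.ker d₂).subtype) h
  rwa [Submodule.map_smul'', Submodule.map_subtype_top] at h'

lemma koszul_mem_colon_smul_range [Module.Projective A F₁] [Module.Projective A F₂]
    {d₁ : F₁ →ₗ[A] A} {d₂ : F₂ →ₗ[A] F₁} (hd : Function.Exact d₂ d₁)
    (hpd : HasProjectiveDimensionLT (ModuleCat.of A (A ⧸ LinearMap.range d₁)) 4)
    {K : Ideal A} {e₁ e₂ e₃ : F₁} (h₁ : d₁ e₁ ∈ K) (h₂ : d₁ e₂ ∈ K)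
    (hcolon : (Ideal.span {d₁ e₁, d₁ e₂, d₁ e₃}).colon (LinearMap.range d₁ : Set A) ≤
      K ⊔ Ideal.span {d₁ e₃}) :
    d₁ e₁ • e₂ - d₁ e₂ • e₁ ∈ K.colon {d₁ e₃} • LinearMap.range d₂ := by
  have lift (a b : F₁) : ∃ v, d₂ v = d₁ a • b - d₁ b • a := (hd _).1 (by simp [mul_comm])
  obtain ⟨v₁, hv₁⟩ := lift e₂ e₃
  obtain ⟨v₂, hv₂⟩ := lift e₃ e₁
  obtain ⟨v₃, hv₃⟩ := lift e₁ e₂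
  have hker : d₁ e₁ • v₁ + d₁ e₂ • v₂ + d₁ e₃ • v₃ ∈ LinearMap.ker d₂ := by
    simp only [LinearMap.mem_ker, map_add, map_smul, hv₁, hv₂, hv₃]
    module
  have hmem {L : Ideal A} {r : A} {v : F₂} (hr : r ∈ L) : r • v ∈ L • (⊤ : Submodule A F₂) :=
    Submodule.smul_mem_smul hr trivial
  have hsmul : d₁ e₁ • v₁ + d₁ e₂ • v₂ + d₁ e₃ • v₃ ∈
      Ideal.span {d₁ e₁, d₁ e₂, d₁ e₃} • (⊤ : Submodule A F₂) :=
    add_mem (add_mem (hmem (Ideal.subset_span (by simp))) (hmem (Ideal.subset_span (by simp))))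
      (hmem (Ideal.subset_span (by simp)))
  have hω := Submodule.smul_mono_left hcolon
    (smul_top_inf_ker_le_colon_smul_ker hd hpd _ ⟨hsmul, hker⟩)
  rw [Submodule.sup_smul, Submodule.ideal_span_singleton_smul] at hω
  obtain ⟨p, hp, _, ⟨b, hb, rfl⟩, hω⟩ := Submodule.mem_sup.1 hω
  have hvb : v₃ - b ∈ K.colon {d₁ e₃} • (⊤ : Submodule A F₂) := by
    rw [← Submodule.colon_span]
    refine mem_colon_smul_top_of_forall_smul_mem fun s hs => ?_
    obtain ⟨r, rfl⟩ := Ideal.mem_span_singleton'.1 hs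
    have : (r * d₁ e₃) • (v₃ - b) = r • (p - d₁ e₁ • v₁ - d₁ e₂ • v₂) := by
      rw [mul_smul, smul_sub, eq_sub_of_add_eq hω]
      simp only [DistribSMul.toLinearMap_apply]
      module
    rw [this]
    exact Submodule.smul_mem _ r (sub_mem (sub_mem (Submodule.smul_mono le_rfl le_top hp)
      (hmem h₁)) (hmem h₂))
  have hdb : d₂ b = 0 := hb
  have := Submodule.mem_map_of_mem (f := d₂) hvb
  rwa [Submodule.map_smul'', Submodule.map_top, map_sub, hdb, sub_zero, hv₃] at this

lemma mem_colon_mul_of_linearCombination_eq_zero {ι : Type u} {x : ι → A} {K m : Ideal A}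
    (hpd : HasProjectiveDimensionLT (ModuleCat.of A (A ⧸ Ideal.span (Set.range x))) 4)
    (hm : ∀ c, Finsupp.linearCombination A x c = 0 → ∀ i, c i ∈ m)
    {i₁ i₂ i₃ : ι} (hi : i₁ ≠ i₂) (h₁ : x i₁ ∈ K) (h₂ : x i₂ ∈ K)
    (hcolon : (Ideal.span {x i₁, x i₂, x i₃}).colon (Ideal.span (Set.range x) : Set A) ≤
      K ⊔ Ideal.span {x i₃}) :
    x i₁ ∈ K.colon {x i₃} * m := by
  let d₁ := Finsupp.linearCombination A x
  let d₂ := (LinearMap.ker d₁).subtype ∘ₗ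
    Finsupp.linearCombination A (id : LinearMap.ker d₁ → LinearMap.ker d₁)
  have hd₂ : LinearMap.range d₂ = LinearMap.ker d₁ := by
    rw [LinearMap.range_comp, Finsupp.range_linearCombination, Set.range_id, Submodule.span_univ,
      Submodule.map_subtype_top]
  have hd₁ : LinearMap.range d₁ = Ideal.span (Set.range x) := Finsupp.range_linearCombination A
  have he (i : ι) : d₁ (Finsupp.single i 1) = x i := by simp [d₁]
  have h := koszul_mem_colon_smul_range (d₁ := d₁) (d₂ := d₂)
    (LinearMap.exact_iff.2 hd₂.symm) (by rwa [hd₁])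
    (K := K) (e₁ := .single i₁ 1) (e₂ := .single i₂ 1) (e₃ := .single i₃ 1)
    (by rwa [he]) (by rwa [he]) (by rwa [he, he, he, hd₁])
  have h' := Submodule.mem_map_of_mem (f := Finsupp.lapply i₂) h
  rw [Submodule.map_smul'', hd₂, he, he, he] at h'
  have hle : (LinearMap.ker d₁).map (Finsupp.lapply i₂) ≤ m :=
    Submodule.map_le_iff_le_comap.2 fun c hc => hm c hc i₂
  simpa [hi] using Submodule.smul_mono le_rfl hle h'

lemma span_pair_le_colon_mul_of_linearCombination_eq_zero {ι : Type u} {x : ι → A} {K m : Ideal A}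
    (hpd : HasProjectiveDimensionLT (ModuleCat.of A (A ⧸ Ideal.span (Set.range x))) 4)
    (hm : ∀ c, Finsupp.linearCombination A x c = 0 → ∀ i, c i ∈ m)
    {i₁ i₂ i₃ : ι} (hi : i₁ ≠ i₂) (hK : Ideal.span {x i₁, x i₂} ≤ K)
    (hcolon : (Ideal.span {x i₁, x i₂, x i₃}).colon (Ideal.span (Set.range x) : Set A) ≤
      K ⊔ Ideal.span {x i₃}) :
    Ideal.span {x i₁, x i₂} ≤ K.colon {x i₃} * m := by
  have h₁ : x i₁ ∈ K := hK (Ideal.subset_span (by simp))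
  have h₂ : x i₂ ∈ K := hK (Ideal.subset_span (by simp))
  rw [Ideal.span_le]
  rintro y (rfl | rfl)
  · exact mem_colon_mul_of_linearCombination_eq_zero hpd hm hi h₁ h₂ hcolon
  · exact mem_colon_mul_of_linearCombination_eq_zero hpd hm hi.symm h₂ h₁
      (by rwa [Set.insert_comm])

end Resolution

section FiberRank

attribute [local instance] Ideal.Quotient.field

variable {A : Type*} [CommRing A] (m : Ideal A) {M N : Type*} [AddCommGroup M] [Module A M]
  [AddCommGroup N] [Module A N]

lemma span_image_mkQ_span (s : Set M) :
    Submodule.span (A ⧸ m) ((m • ⊤ : Submodule A M).mkQ '' Submodule.span A s) =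
      Submodule.span (A ⧸ m) ((m • ⊤ : Submodule A M).mkQ '' s) := by
  refine le_antisymm (Submodule.span_le.2 ?_)
    (Submodule.span_mono (Set.image_mono Submodule.subset_span))
  rw [Set.image_subset_iff]
  exact (Submodule.span_le (p := ((Submodule.span (A ⧸ m) _).restrictScalars A).comap
    (m • ⊤ : Submodule A M).mkQ)).2 fun _ hx => Submodule.subset_span (Set.mem_image_of_mem _ hx)

variable (M) in
/-- The dimension of the fibre `M ⧸ m M` as a vector space over the residue field `A ⧸ m` of a
maximal ideal `m`. -/
def fiberRank : ℕ := Module.finrank (A ⧸ m) (M ⧸ (m • ⊤ : Submodule A M))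

lemma fiberRank_congr (e : M ≃ₗ[A] N) : fiberRank m M = fiberRank m N := by
  refine LinearEquiv.finrank_eq ((Submodule.Quotient.equiv (m • ⊤) (m • ⊤) e
    ?_).extendScalarsOfSurjective Ideal.Quotient.mk_surjective)
  rw [Submodule.map_smul'', Submodule.map_top, LinearEquiv.range]

lemma span_range_mkQ_comp_eq_top {ι : Type*} {x : ι → M} (hx : Submodule.span A (Set.range x) = ⊤) :
    Submodule.span (A ⧸ m) (Set.range ((m • ⊤ : Submodule A M).mkQ ∘ x)) = ⊤ := by
  rw [Set.range_comp, ← span_image_mkQ_span, hx, Submodule.top_coe, Set.image_univ,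
    (Submodule.mkQ_surjective _).range_eq, Submodule.span_univ]

lemma linearIndependent_mkQ_comp_of_card_eq_fiberRank {ι : Type*} [Fintype ι] {x : ι → M}
    (hx : Submodule.span A (Set.range x) = ⊤) (hcard : Fintype.card ι = fiberRank m M) :
    LinearIndependent (A ⧸ m) ((m • ⊤ : Submodule A M).mkQ ∘ x) :=
  linearIndependent_of_top_le_span_of_card_eq_finrank (span_range_mkQ_comp_eq_top m hx).ge hcard

variable {m} in
lemma mem_of_linearCombination_eq_zero {ι : Type*} {x : ι → M}
    (hx : LinearIndependent (A ⧸ m) ((m • ⊤ : Submodule A M).mkQ ∘ x)) {c : ι →₀ A}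
    (hc : Finsupp.linearCombination A x c = 0) (i : ι) : c i ∈ m := by
  have h₀ : Finsupp.linearCombination (A ⧸ m) ((m • ⊤ : Submodule A M).mkQ ∘ x)
      (c.mapRange (Ideal.Quotient.mk m) (map_zero _)) = 0 := by
    rw [Finsupp.linearCombination_apply, Finsupp.sum_mapRange_index (by simp),
      ← map_zero (m • ⊤ : Submodule A M).mkQ, ← hc, Finsupp.linearCombination_apply,
      map_finsuppSum]
    rfl
  exact Ideal.Quotient.eq_zero_iff_mem.1 (DFunLike.congr_fun (linearIndependent_iff.1 hx _ h₀) i)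

variable [m.IsMaximal]

variable {m} in
lemma fiberRank_le_card {ι : Type*} [Fintype ι] {x : ι → M}
    (hx : Submodule.span A (Set.range x) = ⊤) : fiberRank m M ≤ Fintype.card ι := by
  rw [fiberRank, ← finrank_top, ← span_range_mkQ_comp_eq_top m hx]
  exact finrank_range_le_card _

lemma finrank_span_image_mkQ_add_fiberRank [Module.Finite A M] (L : Submodule A M) :
    Module.finrank (A ⧸ m) (Submodule.span (A ⧸ m) ((m • ⊤ : Submodule A M).mkQ '' L)) +
      fiberRank m (M ⧸ L) = fiberRank m M := by
  have hmap : (m • ⊤ : Submodule A M).map L.mkQ = m • ⊤ := by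
    rw [Submodule.map_smul'', Submodule.map_top, Submodule.range_mkQ]
  let φ := (Submodule.mapQ (m • ⊤) (m • ⊤) L.mkQ
    (Submodule.map_le_iff_le_comap.1 hmap.le)).extendScalarsOfSurjective
      (Ideal.Quotient.mk_surjective (I := m))
  have hφ : LinearMap.range φ = ⊤ := by
    refine LinearMap.range_eq_top.2 fun y => ?_
    obtain ⟨x, rfl⟩ := ((Submodule.mkQ_surjective _).comp L.mkQ_surjective) y
    exact ⟨Submodule.Quotient.mk x, rfl⟩
  have hker : (LinearMap.ker φ : Set (M ⧸ (m • ⊤ : Submodule A M))) =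
      (m • ⊤ : Submodule A M).mkQ '' L := by
    have h : ((m • ⊤ : Submodule A (M ⧸ L)).comap L.mkQ).map (m • ⊤ : Submodule A M).mkQ =
        L.map (m • ⊤ : Submodule A M).mkQ := by
      rw [← hmap, Submodule.comap_map_eq, Submodule.ker_mkQ, Submodule.map_sup,
        Submodule.mkQ_map_self, bot_sup_eq]
    exact congrArg SetLike.coe
      ((Submodule.ker_mapQ _ _ _ (Submodule.map_le_iff_le_comap.1 hmap.le)).trans h)
  rw [← hker, Submodule.span_eq, fiberRank, fiberRank,
    ← LinearMap.finrank_range_add_finrank_ker φ, hφ, finrank_top, add_comm]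

lemma fiberRank_quotient_of_le [Module.Finite A M] {L : Submodule A M} (hL : L ≤ m • ⊤) :
    fiberRank m (M ⧸ L) = fiberRank m M := by
  rw [← finrank_span_image_mkQ_add_fiberRank m L, Submodule.span_eq_bot.2, finrank_bot, zero_add]
  rintro _ ⟨x, hx, rfl⟩
  exact (Submodule.Quotient.mk_eq_zero _).2 (hL hx)

lemma fiberRank_quotient_span_range_add_card [Module.Finite A M] {ι : Type*} [Fintype ι]
    {x : ι → M} (hx : LinearIndependent (A ⧸ m) ((m • ⊤ : Submodule A M).mkQ ∘ x)) :
    fiberRank m (M ⧸ Submodule.span A (Set.range x)) + Fintype.card ι = fiberRank m M := by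
  rw [← finrank_span_image_mkQ_add_fiberRank m (Submodule.span A (Set.range x)),
    span_image_mkQ_span, ← Set.range_comp, finrank_span_eq_card hx, add_comm]

end FiberRank

section LinkedQuotients

variable {A : Type*} [CommRing A] {K : Ideal A}

lemma nonempty_colon_quotient_linearEquiv {N : Ideal A} {x : A} (hx : K.colon {x} ≤ K)
    (hKN : K ≤ N) :
    Nonempty ((N.colon {x} ⧸ K.submoduleOf (N.colon {x})) ≃ₗ[A]
      ((N ⊓ (K ⊔ Ideal.span {x}) : Ideal A) ⧸ K.submoduleOf (N ⊓ (K ⊔ Ideal.span {x})))) := by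
  let φ := (K.submoduleOf (N ⊓ (K ⊔ Ideal.span {x}))).mkQ ∘ₗ
    (LinearMap.toSpanSingleton A A x).restrict (p := N.colon {x})
      (q := N ⊓ (K ⊔ Ideal.span {x})) fun a ha =>
        ⟨Submodule.mem_colon_singleton.1 ha,
          Ideal.mem_sup_right (Ideal.mem_span_singleton'.2 ⟨a, rfl⟩)⟩
  have hφ : Function.Surjective φ := by
    rintro ⟨⟨w, hwN, hw⟩⟩
    obtain ⟨b, hb, z, hz, rfl⟩ := Submodule.mem_sup.1 hw
    obtain ⟨c, rfl⟩ := Ideal.mem_span_singleton'.1 hz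
    have hc : c * x ∈ N := by simpa using sub_mem hwN (hKN hb)
    refine ⟨⟨c, Submodule.mem_colon_singleton.2 hc⟩, (Submodule.Quotient.eq _).2 ?_⟩
    change c * x - (b + c * x) ∈ K
    simpa using hb
  have hker : K.submoduleOf (N.colon {x}) = LinearMap.ker φ := by
    ext a
    rw [LinearMap.mem_ker, LinearMap.comp_apply, Submodule.mkQ_apply,
      Submodule.Quotient.mk_eq_zero]
    exact ⟨fun ha => K.mul_mem_right x ha, fun ha => hx (Submodule.mem_colon_singleton.2 ha)⟩
  exact ⟨(Submodule.quotEquivOfEq _ _ hker).trans (φ.quotKerEquivOfSurjective hφ)⟩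

lemma nonempty_colon_quotient_linearEquiv_colon_quotient {u h : A} (hu : K.colon {u} ≤ K)
    (hh : K.colon {h} ≤ K) :
    Nonempty (((K ⊔ Ideal.span {h}).colon {u} ⧸ K.submoduleOf ((K ⊔ Ideal.span {h}).colon {u}))
      ≃ₗ[A]
      ((K ⊔ Ideal.span {u}).colon {h} ⧸ K.submoduleOf ((K ⊔ Ideal.span {u}).colon {h}))) := by
  obtain ⟨e₁⟩ := nonempty_colon_quotient_linearEquiv (N := K ⊔ Ideal.span {h}) hu le_sup_left
  obtain ⟨e₂⟩ := nonempty_colon_quotient_linearEquiv (N := K ⊔ Ideal.span {u}) hh le_sup_left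
  rw [inf_comm] at e₂
  exact ⟨e₁.trans e₂.symm⟩

lemma submoduleOf_le_smul_top {I J m : Ideal A} (h : J ≤ m * I) : J.submoduleOf I ≤ m • ⊤ :=
  fun a ha => (Submodule.mem_smul_top_iff m I a).2 (h ha)

lemma span_range_submoduleOf {ι : Type*} {I : Ideal A} (x : ι → I) :
    Submodule.span A (Set.range x) =
      (Ideal.span (Set.range fun i => (x i : A))).submoduleOf I := by
  refine (Submodule.comap_map_eq_of_injective I.subtype_injective _).symm.trans ?_
  rw [Submodule.map_span, ← Set.range_comp]
  rfl

lemma fiberRank_colon_add_card [IsNoetherianRing A] (m : Ideal A) [m.IsMaximal] {u h : A}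
    (hu : K.colon {u} ≤ K) (hh : K.colon {h} ≤ K) {ι : Type*} [Fintype ι]
    {x : ι → (K ⊔ Ideal.span {h}).colon {u}} (hxK : Ideal.span (Set.range fun i => (x i : A)) = K)
    (hx : LinearIndependent (A ⧸ m) ((m • ⊤ : Submodule A _).mkQ ∘ x))
    (hK : K ≤ m * (K ⊔ Ideal.span {u}).colon {h}) :
    fiberRank m ((K ⊔ Ideal.span {u}).colon {h}) + Fintype.card ι =
      fiberRank m ((K ⊔ Ideal.span {h}).colon {u}) := by
  obtain ⟨e⟩ := nonempty_colon_quotient_linearEquiv_colon_quotient hu hh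
  rw [← fiberRank_quotient_of_le m (submoduleOf_le_smul_top hK), ← fiberRank_congr m e,
    ← fiberRank_quotient_span_range_add_card m hx, span_range_submoduleOf, hxK]

end LinkedQuotients

section GradedNakayama

attribute [local instance] Ideal.Quotient.field

variable {A σ : Type*} [CommRing A] [SetLike σ A] [AddSubmonoidClass σ A] {𝒜 : ℕ → σ}
  [GradedRing 𝒜]

local notation "𝔪" => HomogeneousIdeal.toIdeal (HomogeneousIdeal.irrelevant 𝒜)

lemma decompose_eq_zero_of_mem_irrelevant_pow {d i : ℕ} (hi : i < d) {x : A}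
    (hx : x ∈ 𝔪 ^ d) : (DirectSum.decompose 𝒜 x i : A) = 0 := by
  classical
  induction d generalizing i x with
  | zero => exact absurd hi i.not_lt_zero
  | succ d ih =>
    rw [pow_succ'] at hx
    induction hx using Submodule.mul_induction_on' with
    | mem_mul_mem a ha b hb =>
      rw [DirectSum.decompose_mul, DirectSum.coe_mul_apply]
      refine Finset.sum_eq_zero fun p hp => ?_
      obtain hlt | hle := lt_or_ge p.2 d
      · rw [ih hlt hb, mul_zero]
      · obtain ⟨-, hpi⟩ := Finset.mem_filter.1 hp
        rw [show p.1 = 0 by omega]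
        exact mul_eq_zero_of_left ((HomogeneousIdeal.mem_irrelevant_iff 𝒜 a).1 ha) _
    | add x _ y _ hx hy =>
      rw [DirectSum.decompose_add, DirectSum.add_apply, AddMemClass.coe_add, hx, hy, add_zero]

lemma le_of_le_sup_irrelevant_mul {I N : Ideal A} (hN : N.IsHomogeneous 𝒜)
    (hI : I ≤ N ⊔ 𝔪 * I) : I ≤ N := by
  have hpow (d : ℕ) : I ≤ N ⊔ 𝔪 ^ d := by
    induction d with
    | zero => rw [pow_zero, Ideal.one_eq_top, sup_top_eq]; exact le_top
    | succ d ih =>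
      refine hI.trans (sup_le le_sup_left ((Ideal.mul_mono_right ih).trans ?_))
      rw [Ideal.mul_sup, ← pow_succ']
      exact sup_le_sup_right Ideal.mul_le_right _
  refine fun x hx => (hN.mem_iff _).2 fun i => ?_
  obtain ⟨y, hy, z, hz, rfl⟩ := Submodule.mem_sup.1 (hpow (i + 1) hx)
  rw [DirectSum.decompose_add, DirectSum.add_apply, AddMemClass.coe_add,
    decompose_eq_zero_of_mem_irrelevant_pow i.lt_succ_self hz, add_zero]
  exact (hN.mem_iff _).1 hy i

lemma span_range_eq_top_iff_le_span {I : Ideal A} {ι : Type*} {x : ι → I} :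
    Submodule.span A (Set.range x) = ⊤ ↔ I ≤ Ideal.span (Set.range fun i => (x i : A)) := by
  rw [span_range_submoduleOf, Submodule.submoduleOf_eq_top]

lemma span_range_eq_top_of_span_range_mkQ_comp_eq_top {I : Ideal A} {ι : Type*} {x : ι → I}
    (hx : ∀ i, SetLike.IsHomogeneousElem 𝒜 (x i : A))
    (hspan : Submodule.span (A ⧸ 𝔪) (Set.range ((𝔪 • ⊤ : Submodule A I).mkQ ∘ x)) = ⊤) :
    Submodule.span A (Set.range x) = ⊤ := by
  have hsup : (𝔪 • ⊤ : Submodule A I) ⊔ Submodule.span A (Set.range x) = ⊤ := by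
    rw [← Submodule.map_mkQ_eq_top, Submodule.map_span, ← Set.range_comp,
      ← Submodule.restrictScalars_span A (A ⧸ 𝔪) Ideal.Quotient.mk_surjective, hspan,
      Submodule.restrictScalars_top]
  refine span_range_eq_top_iff_le_span.2 (le_of_le_sup_irrelevant_mul (𝒜 := 𝒜)
    (Ideal.homogeneous_span _ _ (Set.forall_mem_range.2 hx)) ?_)
  have hmap := congrArg (Submodule.map I.subtype) hsup
  rw [Submodule.map_sup, Submodule.map_smul'', Submodule.map_subtype_top, Submodule.map_span,
    ← Set.range_comp, sup_comm] at hmap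
  exact hmap.ge

lemma span_range_mk_eq_top {I : Ideal A} {s : Set A} (hs : Ideal.span s = I) :
    Submodule.span A (Set.range fun y : s => (⟨y, hs ▸ Ideal.subset_span y.2⟩ : I)) = ⊤ := by
  refine span_range_eq_top_iff_le_span.2 (hs.ge.trans (Ideal.span_mono fun y hy => ?_))
  exact ⟨⟨y, hy⟩, rfl⟩

lemma spanFinrank_le_fiberRank [Ideal.IsMaximal 𝔪] {I : Ideal A} (hI : I.IsHomogeneous 𝒜)
    (hfg : Submodule.FG I) : I.spanFinrank ≤ fiberRank 𝔪 I := by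
  have : Module.Finite A I := Module.Finite.iff_fg.2 hfg
  obtain ⟨T, hT⟩ := (Ideal.IsHomogeneous.iff_exists 𝒜 I).1 hI
  obtain ⟨κ, a, -, hspan, hli⟩ := exists_linearIndependent' (A ⧸ 𝔪)
    ((𝔪 • ⊤ : Submodule A I).mkQ ∘ fun y : Subtype.val '' T =>
      (⟨y, hT ▸ Ideal.subset_span y.2⟩ : I))
  rw [span_range_mkQ_comp_eq_top _ (span_range_mk_eq_top hT.symm)] at hspan
  have := hli.finite
  have := Fintype.ofFinite κ
  have hle := span_range_eq_top_iff_le_span.1 (span_range_eq_top_of_span_range_mkQ_comp_eq_top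
    (fun i => by obtain ⟨t, -, ht⟩ := (a i).2; exact ht ▸ t.2) hspan)
  have hIspan : Ideal.span (Set.range fun i => ((a i : Subtype.val '' T) : A)) = I :=
    le_antisymm (Ideal.span_le.2 (Set.range_subset_iff.2 fun i => hT ▸ Ideal.subset_span (a i).2))
      hle
  rw [fiberRank, ← finrank_top, ← hspan, finrank_span_eq_card hli, ← hIspan,
    ← Nat.card_eq_fintype_card, ← Set.ncard_univ, ← Set.image_univ]
  exact (Submodule.spanFinrank_span_le_ncard_of_finite (Set.toFinite _)).trans
    Set.ncard_image_le

lemma spanFinrank_eq_fiberRank [Ideal.IsMaximal 𝔪] {I : Ideal A} (hI : I.IsHomogeneous 𝒜)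
    (hfg : Submodule.FG I) : I.spanFinrank = fiberRank 𝔪 I := by
  refine le_antisymm (spanFinrank_le_fiberRank hI hfg) ?_
  obtain ⟨T, hT, hTI⟩ := hfg.exists_span_finset_card_eq_spanFinrank
  rw [← hT, ← Fintype.card_coe]
  exact fiberRank_le_card (span_range_mk_eq_top hTI)

end GradedNakayama

section RegularSequence

variable {A : Type*} [CommRing A]

lemma colon_sup_span_singleton_le {K : Ideal A} {x r : A} (hx : K.colon {x} ≤ K)
    (hr : (K ⊔ Ideal.span {x}).colon {r} ≤ K ⊔ Ideal.span {x}) :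
    (K ⊔ Ideal.span {r}).colon {x} ≤ K ⊔ Ideal.span {r} := by
  intro a ha
  obtain ⟨b, hb, _, hz, hsum⟩ := Submodule.mem_sup.1 (Submodule.mem_colon_singleton.1 ha)
  obtain ⟨c, rfl⟩ := Ideal.mem_span_singleton'.1 hz
  have hc : c ∈ (K ⊔ Ideal.span {x}).colon {r} := by
    rw [Submodule.mem_colon_singleton, smul_eq_mul, ← add_sub_cancel_left b (c * r), hsum]
    exact sub_mem (Ideal.mem_sup_right (Ideal.mem_span_singleton'.2 ⟨a, rfl⟩))
      (Ideal.mem_sup_left hb)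
  obtain ⟨d, hd, _, hw, rfl⟩ := Submodule.mem_sup.1 (hr hc)
  obtain ⟨t, rfl⟩ := Ideal.mem_span_singleton'.1 hw
  have ht : a - t * r ∈ K := hx <| Submodule.mem_colon_singleton.2 <| by
    rw [smul_eq_mul] at hsum ⊢
    rw [show (a - t * r) * x = b + d * r by linear_combination -hsum]
    exact add_mem hb (K.mul_mem_right _ hd)
  rw [← sub_add_cancel a (t * r)]
  exact add_mem (Ideal.mem_sup_left ht) (Ideal.mem_sup_right (Ideal.mem_span_singleton'.2 ⟨t, rfl⟩))

lemma ofList_colon_singleton_le_of_append {rs : List A} {r : A}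
    (h : Sequence.IsWeaklyRegular A (rs ++ [r])) :
    (Ideal.ofList rs).colon {r} ≤ Ideal.ofList rs := by
  rw [Sequence.isWeaklyRegular_append_iff, Sequence.isWeaklyRegular_singleton_iff,
    isSMulRegular_quotient_iff_mem_of_smul_mem] at h
  intro a ha
  simpa using h.2 a (by simpa [mul_comm] using Submodule.mem_colon_singleton.1 ha)

lemma isWeaklyRegular_of_append {rs₁ rs₂ : List A}
    (h : Sequence.IsWeaklyRegular A (rs₁ ++ rs₂)) : Sequence.IsWeaklyRegular A rs₁ :=
  ((Sequence.isWeaklyRegular_append_iff A rs₁ rs₂).1 h).1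

lemma ofList_colon_singleton_le_of_cons {rs : List A} {x : A}
    (h : Sequence.IsWeaklyRegular A (x :: rs)) :
    (Ideal.ofList rs).colon {x} ≤ Ideal.ofList rs := by
  induction rs using List.reverseRecOn with
  | nil => exact ofList_colon_singleton_le_of_append (rs := []) h
  | append_singleton rs r ih =>
    rw [Ideal.ofList_append, Ideal.ofList_singleton]
    refine colon_sup_span_singleton_le (ih (isWeaklyRegular_of_append (rs₂ := [r]) h)) ?_
    rw [sup_comm, ← Ideal.ofList_cons]
    exact ofList_colon_singleton_le_of_append h

lemma nodup_of_isWeaklyRegular {rs : List A} (h : Sequence.IsWeaklyRegular A rs)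
    (htop : Ideal.ofList rs ≠ ⊤) : rs.Nodup := by
  induction rs using List.reverseRecOn with
  | nil => exact List.nodup_nil
  | append_singleton rs r ih =>
    have hrs : Ideal.ofList rs ≠ ⊤ := by
      rw [Ideal.ofList_append] at htop
      exact ne_top_of_le_ne_top htop le_sup_left
    rw [← List.concat_eq_append]
    refine List.Nodup.concat (fun hr => hrs ?_) (ih (isWeaklyRegular_of_append h) hrs)
    refine (Ideal.eq_top_iff_one _).2 (ofList_colon_singleton_le_of_append h ?_)
    rw [Submodule.mem_colon_singleton, one_smul]
    exact Ideal.subset_span hr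

end RegularSequence

section Homogeneous

lemma isHomogeneous_colon_singleton {A σ ι : Type*} [CommRing A] [SetLike σ A]
    [AddSubmonoidClass σ A] [DecidableEq ι] [AddRightCancelMonoid ι] {𝒜 : ι → σ} [GradedRing 𝒜]
    {K : Ideal A} (hK : K.IsHomogeneous 𝒜) {x : A} (hx : SetLike.IsHomogeneousElem 𝒜 x) :
    (K.colon {x}).IsHomogeneous 𝒜 := by
  obtain ⟨d, hd⟩ := hx
  intro i a ha
  rw [Submodule.mem_colon_singleton, smul_eq_mul] at ha ⊢
  rw [← DirectSum.coe_decompose_mul_add_of_right_mem 𝒜 hd]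
  exact hK _ ha

attribute [local instance] MvPolynomial.gradedAlgebra

variable {σ K : Type*} [Field K]

lemma mem_irrelevant_homogeneousSubmodule_iff {p : MvPolynomial σ K} :
    p ∈ (HomogeneousIdeal.irrelevant (homogeneousSubmodule σ K)).toIdeal ↔
      constantCoeff p = 0 := by
  refine (HomogeneousIdeal.mem_irrelevant_iff _ _).trans ?_
  rw [GradedRing.proj_apply]
  change (decomposition.decompose' p 0 : MvPolynomial σ K) = 0 ↔ _
  rw [decomposition.decompose'_apply, homogeneousComponent_zero, C_eq_zero]
  rfl

instance isMaximal_irrelevant_homogeneousSubmodule :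
    (HomogeneousIdeal.irrelevant (homogeneousSubmodule σ K)).toIdeal.IsMaximal := by
  rw [show (HomogeneousIdeal.irrelevant (homogeneousSubmodule σ K)).toIdeal =
    RingHom.ker (constantCoeff (R := K) (σ := σ)) from
      Ideal.ext fun p => mem_irrelevant_homogeneousSubmodule_iff]
  exact RingHom.ker_isMaximal_of_surjective _ fun a => ⟨C a, constantCoeff_C _ a⟩

local notation "R" => MvPolynomial (Fin (n + 1)) k

lemma isHomogeneousIdeal_iff_isHomogeneous {I : Ideal R} :
    IsHomogeneousIdeal I ↔ I.IsHomogeneous (homogeneousSubmodule (Fin (n + 1)) k) := by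
  rw [Ideal.IsHomogeneous.iff_exists]
  constructor
  · rintro ⟨S, hS, rfl⟩
    exact ⟨Subtype.val ⁻¹' S, by
      rw [Set.image_preimage_eq_of_subset (fun f hf => ⟨⟨f, hS f hf⟩, rfl⟩)]⟩
  · rintro ⟨T, rfl⟩
    exact ⟨Subtype.val '' T, by rintro _ ⟨t, -, rfl⟩; exact t.2, rfl⟩

lemma mu_eq_spanFinrank (I : Ideal R) : mu I = I.spanFinrank := by
  obtain ⟨T, hT, hTI⟩ := (IsNoetherian.noetherian I).exists_span_finset_card_eq_spanFinrank
  refine le_antisymm (Nat.sInf_le ⟨T, hT, hTI⟩) (le_csInf ⟨_, T, hT, hTI⟩ ?_)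
  rintro _ ⟨S, rfl, rfl⟩
  exact (Submodule.spanFinrank_span_le_ncard_of_finite S.finite_toSet).trans_eq
    (Set.ncard_coe_finset S)

lemma mu_eq_fiberRank {I : Ideal R} (hI : IsHomogeneousIdeal I) :
    mu I = fiberRank (HomogeneousIdeal.irrelevant (homogeneousSubmodule (Fin (n + 1)) k)).toIdeal
      I := by
  rw [mu_eq_spanFinrank, spanFinrank_eq_fiberRank (isHomogeneousIdeal_iff_isHomogeneous.1 hI)
    (IsNoetherian.noetherian I)]

lemma exists_pos_isHomogeneous_of_mem {I : Ideal R} (hI : I ≠ ⊤) {f : R} (hf : f ∈ I)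
    (hhom : ∃ d, f.IsHomogeneous d) : ∃ d, 0 < d ∧ f.IsHomogeneous d := by
  obtain ⟨_ | d, hd⟩ := hhom
  · rw [← mem_homogeneousSubmodule, homogeneousSubmodule_zero, Submodule.mem_one] at hd
    obtain ⟨c, rfl⟩ := hd
    obtain rfl | hc := eq_or_ne c 0
    · exact ⟨1, one_pos, by rw [map_zero]; exact isHomogeneous_zero _ _ _⟩
    · exact absurd (I.eq_top_of_isUnit_mem hf ((IsUnit.mk0 c hc).map _)) hI
  · exact ⟨d + 1, d.succ_pos, hd⟩

lemma isCI_of_card_le_length {I : Ideal R} (hI : I ≠ ⊤) {rs : List R}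
    (hrs : Sequence.IsRegular R rs) (hhom : ∀ f ∈ rs, ∃ d, f.IsHomogeneous d) {S : Finset R}
    (hrsS : ∀ f ∈ rs, f ∈ S) (hS : Ideal.span (S : Set R) = I) (hcard : S.card ≤ rs.length) :
    IsCI I := by
  classical
  have hrsI : Ideal.ofList rs ≤ I := hS ▸ Ideal.span_mono hrsS
  have hnodup := nodup_of_isWeaklyRegular hrs.toIsWeaklyRegular (ne_top_of_le_ne_top hI hrsI)
  have hrsS' : rs.toFinset = S := Finset.eq_of_subset_of_card_le
    (fun f hf => hrsS f (List.mem_toFinset.1 hf)) (by rwa [List.toFinset_card_of_nodup hnodup])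
  refine ⟨rs, fun f hf => exists_pos_isHomogeneous_of_mem hI (hS ▸ Ideal.subset_span (hrsS f hf))
    (hhom f hf), hrs, ?_⟩
  rw [← hS, ← hrsS', List.coe_toFinset]

end Homogeneous

section ColonByElement

variable {A : Type u} [CommRing A]

lemma colon_sup_span_singleton (K : Ideal A) (x : A) :
    K.colon (K ⊔ Ideal.span {x} : Ideal A) = K.colon {x} := by
  refine le_antisymm (Submodule.colon_mono le_rfl ?_) fun a ha => Submodule.mem_colon.2 ?_
  · exact Set.singleton_subset_iff.2 (Ideal.mem_sup_right (Ideal.mem_span_singleton_self x))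
  · have hle : K ⊔ Ideal.span {x} ≤ K.colon {a} := by
      refine sup_le Ideal.le_colon ((Ideal.span_singleton_le_iff_mem _).2 ?_)
      rwa [Submodule.mem_colon_singleton, smul_eq_mul, mul_comm, ← smul_eq_mul,
        ← Submodule.mem_colon_singleton]
    intro y hy
    rw [smul_eq_mul, mul_comm]
    exact Submodule.mem_colon_singleton.1 (hle hy)

variable {rs rs' : List A} {u h : A}

lemma colon_singleton_eq_of_colon_eq_sup [IsNoetherianRing A] {I : Ideal A}
    (hrs : Sequence.IsWeaklyRegular A rs) (hne : I ≠ ⊤) (hI : Ideal.ofList rs ≤ I)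
    (hpd : HasProjectiveDimensionLT (ModuleCat.of A (A ⧸ I)) (rs.length + 1))
    (hu : (Ideal.ofList rs).colon (I : Set A) = Ideal.ofList rs ⊔ Ideal.span {u}) :
    (Ideal.ofList rs).colon {u} = I := by
  rw [← colon_sup_span_singleton, ← hu, colon_colon_eq_self hrs hI hpd fun _ hi =>
    subsingleton_ext_quotient_of_isWeaklyRegular hne hrs hI hi]

lemma hasProjectiveDimensionLT_quotient_colon_of_sup_eq (hrs : Sequence.IsWeaklyRegular A rs)
    (hrs' : Sequence.IsWeaklyRegular A rs') (hlen : rs'.length = rs.length)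
    (hL : Ideal.ofList rs' ⊔ Ideal.span {h} = Ideal.ofList rs ⊔ Ideal.span {u})
    (hpd : HasProjectiveDimensionLT (ModuleCat.of A (A ⧸ (Ideal.ofList rs).colon {u}))
      (rs.length + 1)) :
    HasProjectiveDimensionLT (ModuleCat.of A (A ⧸ (Ideal.ofList rs').colon {h}))
      (rs.length + 1) := by
  have := hasProjectiveDimensionLT_quotient_ofList hrs
  have hpdL := (colonSequence_shortExact (Ideal.ofList rs) u).hasProjectiveDimensionLT_X₃
    (rs.length + 1) hpd (hasProjectiveDimensionLT_of_ge _ (rs.length + 1) _ (Nat.le_succ _))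
  refine (colonSequence_shortExact (Ideal.ofList rs') h).hasProjectiveDimensionLT_X₁
    (rs.length + 1) (hlen ▸ hasProjectiveDimensionLT_quotient_ofList hrs') ?_
  change HasProjectiveDimensionLT (ModuleCat.of A (A ⧸ Ideal.ofList rs' ⊔ Ideal.span {h})) _
  rwa [hL]

lemma exists_forall_ext_quotient_colon_eq_smul_of_sup_eq (hrs : Sequence.IsWeaklyRegular A rs)
    (hrs' : Sequence.IsWeaklyRegular A rs') (hlen : rs'.length = rs.length)
    (hL : Ideal.ofList rs' ⊔ Ideal.span {h} = Ideal.ofList rs ⊔ Ideal.span {u})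
    (hcolon : (Ideal.ofList rs).colon ((Ideal.ofList rs).colon {u} : Set A) =
      Ideal.ofList rs ⊔ Ideal.span {u}) :
    ∃ e₀ : Abelian.Ext (ModuleCat.of A (A ⧸ (Ideal.ofList rs').colon {h})) (ModuleCat.of A A)
      rs.length, ∀ e, ∃ a : A, a • e₀ = e := by
  have hL' := subsingleton_ext_quotient_sup_span_singleton hrs hcolon
  rw [← hL, ← hlen] at hL'
  exact hlen ▸ exists_forall_ext_quotient_colon_eq_smul hrs' hL'

end ColonByElement

section GeneratorCount

variable {A : Type u} [CommRing A]

lemma ofList_triple (x y z : A) : Ideal.ofList [x, y, z] = Ideal.span {x, y, z} := by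
  simp [Ideal.ofList, Set.insert_def]

lemma fiberRank_colon_add_two [IsNoetherianRing A] {m : Ideal A} [m.IsMaximal] {f g h u : A}
    {I : Ideal A} (hpd : HasProjectiveDimensionLT (ModuleCat.of A (A ⧸ I)) 4)
    {ι : Type u} {x : ι → I} (hxI : Ideal.span (Set.range fun i => (x i : A)) = I)
    (hx : LinearIndependent (A ⧸ m) ((m • ⊤ : Submodule A I).mkQ ∘ x))
    {i₁ i₂ i₃ : ι} (hi : i₁ ≠ i₂) (hf : (x i₁ : A) = f) (hg : (x i₂ : A) = g) (hh : (x i₃ : A) = h)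
    (hcolon_u : (Ideal.span {f, g}).colon {u} ≤ Ideal.span {f, g})
    (hcolon_h : (Ideal.span {f, g}).colon {h} ≤ Ideal.span {f, g})
    (hI : (Ideal.span {f, g} ⊔ Ideal.span {h}).colon {u} = I)
    (hu : (Ideal.span {f, g, h}).colon (I : Set A) ≤
      Ideal.span {f, g} ⊔ Ideal.span {u} ⊔ Ideal.span {h}) :
    fiberRank m ((Ideal.span {f, g} ⊔ Ideal.span {u}).colon {h}) + 2 = fiberRank m I := by
  have hm (c : ι →₀ A) (hc : Finsupp.linearCombination A (fun i => (x i : A)) c = 0) (i : ι) :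
      c i ∈ m := by
    refine mem_of_linearCombination_eq_zero hx (Subtype.ext ?_) i
    rwa [← I.subtype_apply, Finsupp.apply_linearCombination]
  have hle : Ideal.span {f, g} ≤ m * (Ideal.span {f, g} ⊔ Ideal.span {u}).colon {h} := by
    subst hf hg hh
    exact (span_pair_le_colon_mul_of_linearCombination_eq_zero (by rwa [hxI]) hm hi le_sup_left
      (by rwa [hxI])).trans_eq (mul_comm _ _)
  subst hI
  have hpair : Function.Injective ![i₁, i₂] := by
    simp [Function.Injective, Fin.forall_fin_two, hi, hi.symm]
  refine fiberRank_colon_add_card m hcolon_u hcolon_h (ι := Fin 2) (x := x ∘ ![i₁, i₂]) ?_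
    (hx.comp _ hpair) hle
  congr 1
  ext y
  simp [Fin.exists_fin_two, hf, hg, eq_comm]

end GeneratorCount

section Watanabe

attribute [local instance] MvPolynomial.gradedAlgebra

local notation "R" => MvPolynomial (Fin (n + 1)) k

local notation "𝔪" => HomogeneousIdeal.toIdeal
  (HomogeneousIdeal.irrelevant (homogeneousSubmodule (Fin (n + 1)) k))

lemma IsHomogeneousIdeal.colon_singleton {K : Ideal R} (hK : IsHomogeneousIdeal K) {x : R}
    (hx : ∃ d, x.IsHomogeneous d) : IsHomogeneousIdeal (K.colon {x}) :=
  isHomogeneousIdeal_iff_isHomogeneous.2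
    (isHomogeneous_colon_singleton (isHomogeneousIdeal_iff_isHomogeneous.1 hK) hx)

lemma isHomogeneousIdeal_ofList {rs : List R} (hrs : ∀ r ∈ rs, ∃ d, r.IsHomogeneous d) :
    IsHomogeneousIdeal (Ideal.ofList rs) :=
  ⟨_, hrs, rfl⟩

lemma mu_top_le_one : mu (⊤ : Ideal R) ≤ 1 :=
  Nat.sInf_le ⟨{1}, Finset.card_singleton 1, by simp⟩

lemma linearIndependent_mkQ_of_card_eq_mu {I : Ideal R} (hI : IsHomogeneousIdeal I)
    {S : Finset R} (hS : Ideal.span (S : Set R) = I) (hcard : S.card = mu I) :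
    LinearIndependent (R ⧸ 𝔪) ((𝔪 • ⊤ : Submodule R I).mkQ ∘
      fun y : (S : Set R) => (⟨y, hS ▸ Ideal.subset_span y.2⟩ : I)) :=
  linearIndependent_mkQ_comp_of_card_eq_fiberRank _ (span_range_mk_eq_top hS)
    (by rw [← mu_eq_fiberRank hI, ← hcard]; exact Fintype.card_coe S)

lemma ofList_sup_span_singleton_comm (f g h u : R) :
    Ideal.ofList [u, f, g] ⊔ Ideal.span {h} = Ideal.ofList [f, g, h] ⊔ Ideal.span {u} := by
  simp only [Ideal.ofList_cons, Ideal.ofList_nil, sup_bot_eq]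
  ac_rfl

lemma IsArithGorHt3.colon_singleton_of_colon_eq {f g h u : R} {I : Ideal R}
    (hI : IsArithGorHt3 I) (hreg : Sequence.IsWeaklyRegular R [f, g, h])
    (hreg' : Sequence.IsWeaklyRegular R [u, f, g])
    (hIu : (Ideal.ofList [f, g, h]).colon {u} = I)
    (hu : (Ideal.ofList [f, g, h]).colon (I : Set R) = Ideal.ofList [f, g, h] ⊔ Ideal.span {u})
    (hhom : IsHomogeneousIdeal ((Ideal.ofList [u, f, g]).colon {h}))
    (hne : (Ideal.ofList [u, f, g]).colon {h} ≠ ⊤) :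
    IsArithGorHt3 ((Ideal.ofList [u, f, g]).colon {h}) := by
  subst hIu
  have hL := ofList_sup_span_singleton_comm f g h u
  obtain ⟨e₀, he₀⟩ :=
    exists_forall_ext_quotient_colon_eq_smul_of_sup_eq hreg hreg' rfl hL hu
  exact isArithGorHt3_of_forall_eq_smul hne hhom hreg' rfl Ideal.le_colon
    (hasProjectiveDimensionLT_quotient_colon_of_sup_eq hreg hreg' rfl hL
      hI.hasProjectiveDimensionLT_quotient) he₀

lemma IsArithGorHt3.mu_colon_singleton_add_two {f g h u : R} {I : Ideal R}
    (hI : IsArithGorHt3 I) (hreg : Sequence.IsWeaklyRegular R [f, g, h])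
    (hreg' : Sequence.IsWeaklyRegular R [u, f, g])
    {S : Finset R} (hf : f ∈ S) (hg : g ∈ S) (hh : h ∈ S)
    (hS : Ideal.span (S : Set R) = I) (hcard : S.card = mu I)
    (hIu : (Ideal.ofList [f, g, h]).colon {u} = I)
    (hu : (Ideal.ofList [f, g, h]).colon (I : Set R) = Ideal.ofList [f, g, h] ⊔ Ideal.span {u})
    (hhom : IsHomogeneousIdeal ((Ideal.ofList [u, f, g]).colon {h})) :
    mu ((Ideal.ofList [u, f, g]).colon {h}) + 2 = mu I := by
  have hpair : Ideal.ofList [f, g] = Ideal.span {f, g} := by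
    simp [Ideal.ofList_cons, Ideal.span_insert]
  have hfgh : Ideal.ofList [f, g, h] = Ideal.span {f, g} ⊔ Ideal.span {h} := by
    rw [← hpair, ← Ideal.ofList_singleton, ← Ideal.ofList_append]
    rfl
  have hufg : Ideal.ofList [u, f, g] = Ideal.span {f, g} ⊔ Ideal.span {u} := by
    rw [Ideal.ofList_cons, hpair, sup_comm]
  have hne : Ideal.ofList [f, g, h] ≠ ⊤ := ne_top_of_le_ne_top hI.1 (hIu ▸ Ideal.le_colon)
  have hfg : f ≠ g :=
    List.ne_of_not_mem_cons (List.nodup_cons.1 (nodup_of_isWeaklyRegular hreg hne)).1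
  have hSI : Ideal.span (Set.range fun y : (S : Set R) => (y : R)) = I := by
    rw [Subtype.range_coe, hS]
  rw [mu_eq_fiberRank hhom, mu_eq_fiberRank hI.2.1, hufg]
  refine fiberRank_colon_add_two (ι := (S : Set R)) (i₁ := ⟨f, hf⟩) (i₂ := ⟨g, hg⟩)
    (i₃ := ⟨h, hh⟩) hI.hasProjectiveDimensionLT_quotient ?_
    (linearIndependent_mkQ_of_card_eq_mu hI.2.1 hS hcard) (by simpa using hfg) rfl rfl rfl
    (hpair ▸ ofList_colon_singleton_le_of_cons hreg')
    (hpair ▸ ofList_colon_singleton_le_of_append (rs := [f, g]) hreg) (hfgh ▸ hIu) ?_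
  · exact hSI
  · rw [← ofList_triple, hu, ← ofList_sup_span_singleton_comm, hufg]

lemma ne_top_of_mu_add_two_eq {rs : List R} {I J : Ideal R} (hnotCI : ¬ IsCI I) (hI : I ≠ ⊤)
    (hrs : Sequence.IsRegular R rs) (hlen : rs.length = 3)
    (hhom : ∀ r ∈ rs, ∃ d, r.IsHomogeneous d) {S : Finset R} (hrsS : ∀ r ∈ rs, r ∈ S)
    (hS : Ideal.span (S : Set R) = I) (hcard : S.card = mu I) (hJ : mu J + 2 = mu I) : J ≠ ⊤ := by
  rintro rfl
  refine hnotCI (isCI_of_card_le_length hI hrs hhom hrsS hS ?_)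
  rw [hcard, ← hJ, hlen]
  exact Nat.add_le_add_right mu_top_le_one 2

end Watanabe

/-- Watanabe's Lemma, second part: if moreover `u, f, g` is a regular sequence, then
`(u,f,g) : (f,g,h,u)` is an arithmetically Gorenstein homogeneous ideal of height three
with two fewer minimal generators than `I`. -/
theorem stmt_4 (I : Ideal (MvPolynomial (Fin (n+1)) k))
    (hGor : IsArithGorHt3 I) (hnotCI : ¬ IsCI I)
    (f g h u : MvPolynomial (Fin (n+1)) k)
    (hfI : f ∈ I) (hgI : g ∈ I) (hhI : h ∈ I)
    (hfhom : ∃ d, MvPolynomial.IsHomogeneous f d)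
    (hghom : ∃ d, MvPolynomial.IsHomogeneous g d)
    (hhhom : ∃ d, MvPolynomial.IsHomogeneous h d)
    (huhom : ∃ d, MvPolynomial.IsHomogeneous u d)
    (hreg : RingTheory.Sequence.IsRegular (MvPolynomial (Fin (n+1)) k) [f, g, h])
    (hext : ∃ S : Finset (MvPolynomial (Fin (n+1)) k), f ∈ S ∧ g ∈ S ∧ h ∈ S ∧
      Ideal.span (S : Set (MvPolynomial (Fin (n+1)) k)) = I ∧ S.card = mu I)
    (hu : (Ideal.span {f, g, h}).colon I = Ideal.span {f, g, h, u})
    (hreg' : RingTheory.Sequence.IsRegular (MvPolynomial (Fin (n+1)) k) [u, f, g])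
    (I' : Ideal (MvPolynomial (Fin (n+1)) k))
    (hI' : I' = (Ideal.span {u, f, g}).colon (Ideal.span {f, g, h, u})) :
    IsArithGorHt3 I' ∧ mu I' + 2 = mu I := by
  obtain ⟨S, hfS, hgS, hhS, hS, hcard⟩ := hext
  have hL : Ideal.span {f, g, h, u} = Ideal.ofList [f, g, h] ⊔ Ideal.span {u} := by
    rw [ofList_triple, sup_comm, ← Ideal.span_insert, Set.insert_comm u f, Set.insert_comm u g,
      Set.pair_comm u h]
  rw [← ofList_triple, hL] at hu
  have hfghI : Ideal.ofList [f, g, h] ≤ I := by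
    simp [Ideal.ofList_cons, Ideal.span_le, hfI, hgI, hhI]
  have hIu : (Ideal.ofList [f, g, h]).colon {u} = I :=
    colon_singleton_eq_of_colon_eq_sup hreg.toIsWeaklyRegular hGor.1 hfghI
      hGor.hasProjectiveDimensionLT_quotient hu
  rw [hL, ← ofList_sup_span_singleton_comm, ← ofList_triple, colon_sup_span_singleton] at hI'
  subst hI'
  have hhom : IsHomogeneousIdeal ((Ideal.ofList [u, f, g]).colon {h}) :=
    (isHomogeneousIdeal_ofList (by simp [huhom, hfhom, hghom])).colon_singleton hhhom
  have hmu := hGor.mu_colon_singleton_add_two hreg.toIsWeaklyRegular hreg'.toIsWeaklyRegular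
    hfS hgS hhS hS hcard hIu hu hhom
  have hne := ne_top_of_mu_add_two_eq hnotCI hGor.1 hreg rfl
    (by simp [hfhom, hghom, hhhom]) (by simp [hfS, hgS, hhS]) hS hcard hmu
  exact ⟨hGor.colon_singleton_of_colon_eq hreg.toIsWeaklyRegular hreg'.toIsWeaklyRegular hIu hu
    hhom hne, hmu⟩

end
end

section
/- Let f, g, h and f', g', h' be homogeneous elements of R of positive degrees such that f, g, h is a regular sequence and f', g', h' is a regular sequence. If (f',g',h') ⊆ (f,g,h) and (deg f')·(deg g')·(deg h') = (deg f)·(deg g)·(deg h), then (f',g',h') = (f,g,h). (A height-three complete intersection contained in another one of the same degree is equal to it.) -/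
/-
Common setup: `R = k[x₀,…,xₙ]` is the standard graded polynomial ring
`MvPolynomial (Fin (n+1)) k` over a field `k`.
-/

open CategoryTheory MvPolynomial RingTheory

noncomputable section

variable {k : Type} [Field k] {n : ℕ}

/-!
Write `F' = M F` with `M` a square matrix whose `(i, j)` entry is homogeneous of degree
`deg F'ᵢ - deg Fⱼ`. Since `(F')` has height `r`, the number of its generators, it lies in no proper
ideal with fewer than `r` generators; hence replacing the `F'ᵢ`, `i ∈ s`, by the elements of a set
of fewer than `#s` of the `Fⱼ` never gives an ideal containing `(F')`. This is used twice. First, it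
is Hall's condition for the relation `deg Fⱼ ≤ deg F'ᵢ`, so `deg F_{σ i} ≤ deg F'ᵢ` for some
permutation `σ`, and equality of the products of the degrees makes all of these equalities. Then
`det M` has degree zero, so it is a constant. If it vanished, a combination of the `F'ᵢ` with
constant coefficients and top degree `e` would lie in the ideal of the `Fⱼ` of degree less than `e`,
which is the excluded situation again. So `M` is invertible and the ideals agree.
-/

section Height

variable {R : Type*} [CommRing R]

lemma height_add_one_le_of_isSMulRegular {I J : Ideal R} {x : R} (hx : IsSMulRegular (R ⧸ I) x)
    (hIJ : I ≤ J) (hxJ : x ∈ J) : I.height + 1 ≤ J.height := by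
  rw [J.height_eq_inf_minimalPrimes]
  refine le_iInf₂ fun Q hQ => ?_
  have := hQ.isPrime
  obtain ⟨P, hP, hPQ⟩ := Ideal.exists_minimalPrimes_le (hIJ.trans hQ.le)
  have := hP.isPrime
  have hxP : x ∉ P := hx.notMem_of_mem_minimalPrimes (by rwa [Ideal.annihilator_quotient])
  have hlt : P < Q := lt_of_le_of_ne hPQ fun h => hxP (h ▸ hQ.le hxJ)
  calc I.height + 1 ≤ P.height + 1 := by gcongr; exact hP.le
    _ ≤ Q.height := Ideal.height_add_one_le_of_lt_of_isPrime hlt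

lemma length_le_height_ofList {l : List R} (hl : Sequence.IsWeaklyRegular R l) :
    (l.length : ℕ∞) ≤ (Ideal.ofList l).height := by
  suffices ∀ i ≤ l.length, (i : ℕ∞) ≤ (Ideal.ofList (l.take i)).height by
    simpa only [List.take_length] using this l.length le_rfl
  intro i
  induction i with
  | zero => simp
  | succ i ih =>
    intro hi
    have hreg : IsSMulRegular (R ⧸ Ideal.ofList (l.take i)) l[i] := by
      have := hl.regular_mod_prev i hi
      rwa [smul_eq_mul, Ideal.mul_top] at this
    have htake : Ideal.ofList (l.take (i + 1)) = Ideal.ofList (l.take i) ⊔ Ideal.span {l[i]} := by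
      rw [List.take_succ_eq_append_getElem hi, Ideal.ofList_append, Ideal.ofList_singleton]
    calc ((i + 1 : ℕ) : ℕ∞) ≤ (Ideal.ofList (l.take i)).height + 1 := by
          push_cast
          gcongr
          exact ih (by omega)
      _ ≤ (Ideal.ofList (l.take (i + 1))).height := by
          rw [htake]
          exact height_add_one_le_of_isSMulRegular hreg le_sup_left
            (Ideal.mem_sup_right (Ideal.mem_span_singleton_self _))

lemma card_le_card_of_mem_span_image_union_image_compl [IsNoetherianRing R] {ι κ : Type*}
    [Fintype ι] {F : κ → R} {F' : ι → R} (hF : Ideal.span (Set.range F) ≠ ⊤)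
    (hle : Ideal.span (Set.range F') ≤ Ideal.span (Set.range F))
    (hht : (Fintype.card ι : ℕ∞) ≤ (Ideal.span (Set.range F')).height)
    {s : Finset ι} {t : Finset κ} (hs : ∀ i ∈ s, F' i ∈ Ideal.span (F '' t ∪ F' '' (↑s)ᶜ)) :
    s.card ≤ t.card := by
  classical
  set S : Set R := F '' t ∪ F' '' (↑s)ᶜ with hS
  have hSF : Ideal.span S ≤ Ideal.span (Set.range F) :=
    Ideal.span_le.2 <| Set.union_subset
      ((Set.image_subset_range F t).trans Ideal.subset_span)
      ((Set.image_subset_range F' _).trans (Ideal.subset_span.trans hle))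
  have hF'S : Ideal.span (Set.range F') ≤ Ideal.span S := by
    rw [Ideal.span_le, Set.range_subset_iff]
    intro i
    by_cases hi : i ∈ s
    · exact hs i hi
    · exact Ideal.subset_span (Or.inr ⟨i, hi, rfl⟩)
  have hcard : S.ncard ≤ t.card + sᶜ.card := by
    rw [hS, ← Finset.coe_compl, ← Set.ncard_coe_finset t, ← Set.ncard_coe_finset sᶜ]
    exact (Set.ncard_union_le _ _).trans
      (add_le_add (Set.ncard_image_le t.finite_toSet) (Set.ncard_image_le sᶜ.finite_toSet))
  have hfin : S.Finite := (t.finite_toSet.image F).union ((Set.toFinite _).image F')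
  have hrank : Fintype.card ι ≤ (Ideal.span S).spanFinrank := by
    exact_mod_cast hht.trans <| (Ideal.height_mono hF'S).trans <|
      Ideal.height_le_spanFinrank _ fun h => hF (top_le_iff.1 (h ▸ hSF))
  have hgen : (Ideal.span S).spanFinrank ≤ S.ncard :=
    Submodule.spanFinrank_span_le_ncard_of_finite hfin
  have := s.card_compl_add_card
  omega

end Height

lemma span_range_le_span_range_mulVec {R ι : Type*} [CommRing R] [Fintype ι] [DecidableEq ι]
    {M : Matrix ι ι R} (hM : IsUnit M.det) (F : ι → R) :
    Ideal.span (Set.range F) ≤ Ideal.span (Set.range (M.mulVec F)) := by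
  rw [Ideal.span_le, Set.range_subset_iff]
  intro j
  have hF : M⁻¹.mulVec (M.mulVec F) = F := by
    rw [Matrix.mulVec_mulVec, Matrix.nonsing_inv_mul M hM, Matrix.one_mulVec]
  rw [← congrFun hF j]
  exact Ideal.sum_mem _ fun i _ => Ideal.mul_mem_left _ _ (Ideal.subset_span ⟨i, rfl⟩)

lemma eq_of_le_of_prod_le {ι : Type*} [Fintype ι] {a b : ι → ℕ} (ha : ∀ i, 0 < a i) (hab : a ≤ b)
    (hprod : ∏ i, b i ≤ ∏ i, a i) : a = b := by
  by_contra hne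
  obtain ⟨i, hi⟩ := (Pi.lt_def.1 (lt_of_le_of_ne hab hne)).2
  exact hprod.not_gt <|
    Finset.prod_lt_prod (fun i _ => ha i) (fun i _ => hab i) ⟨i, Finset.mem_univ i, hi⟩

section Graded

variable {A S ι κ : Type*} [CommRing A] [SetLike S A] (𝒜 : ℕ → S)

/-- A homogeneous matrix, with rows graded by `d'` and columns by `d`: the `(i, j)` entry is
homogeneous of degree `d' i - d j`. As this is a truncated difference, it is required separately
that the entry vanishes when `d' i < d j`. -/
structure IsHomogeneousMatrix (d' : ι → ℕ) (d : κ → ℕ) (M : Matrix ι κ A) : Prop where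
  mem (i : ι) (j : κ) : M i j ∈ 𝒜 (d' i - d j)
  le_of_ne_zero {i : ι} {j : κ} : M i j ≠ 0 → d j ≤ d' i

variable {𝒜} {d' : ι → ℕ} {d : κ → ℕ} {F : κ → A}

lemma IsHomogeneousMatrix.mulVec_mem [Fintype κ] {M : Matrix ι κ A}
    (hM : IsHomogeneousMatrix 𝒜 d' d M) {J : Ideal A} {i : ι} (hJ : ∀ j, d j ≤ d' i → F j ∈ J) :
    M.mulVec F i ∈ J := by
  refine Ideal.sum_mem _ fun j _ => ?_
  by_cases hij : M i j = 0
  · simp [hij]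
  · exact J.mul_mem_left _ (hJ j (hM.le_of_ne_zero hij))

variable [AddSubgroupClass S A] [GradedRing 𝒜]

lemma exists_isHomogeneousMatrix_mulVec_eq [Fintype κ] {F' : ι → A} (hF : ∀ j, F j ∈ 𝒜 (d j))
    (hF' : ∀ i, F' i ∈ 𝒜 (d' i)) (hle : Ideal.span (Set.range F') ≤ Ideal.span (Set.range F)) :
    ∃ M, IsHomogeneousMatrix 𝒜 d' d M ∧ M.mulVec F = F' := by
  have hcomb (i : ι) : ∃ c : κ → A, ∑ j, c j * F j = F' i :=
    Ideal.mem_span_range_iff_exists_fun.1 (hle (Ideal.subset_span ⟨i, rfl⟩))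
  choose c hc using hcomb
  refine ⟨fun i j => if d j ≤ d' i then DirectSum.decompose 𝒜 (c i j) (d' i - d j) else 0,
    ⟨fun i j => ?_, fun h => ?_⟩, funext fun i => ?_⟩
  · dsimp only
    split_ifs
    · exact SetLike.coe_mem _
    · exact zero_mem _
  · by_contra hlt
    exact h (if_neg hlt)
  · have hdec := DirectSum.decompose_of_mem_same 𝒜 (hF' i)
    rw [← hc i, DirectSum.decompose_sum, DirectSum.sum_apply, AddSubmonoidClass.coe_finsetSum]
      at hdec
    rw [← hc i, ← hdec]
    refine Finset.sum_congr rfl fun j _ => ?_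
    rw [DirectSum.coe_decompose_mul_of_right_mem 𝒜 _ (hF j), ite_mul, zero_mul]

lemma IsHomogeneousMatrix.det_mem [Fintype ι] [DecidableEq ι] {d : ι → ℕ} {M : Matrix ι ι A}
    (hM : IsHomogeneousMatrix 𝒜 d' d M) : M.det ∈ 𝒜 (∑ i, d' i - ∑ i, d i) := by
  rw [Matrix.det_apply]
  refine sum_mem fun σ _ => ?_
  suffices ∏ i, M (σ i) i ∈ 𝒜 (∑ i, d' i - ∑ i, d i) by
    rcases Int.units_eq_one_or (Equiv.Perm.sign σ) with h | h
    · simpa only [h, one_smul]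
    · simpa only [h, Units.neg_smul, one_smul] using neg_mem this
  by_cases hzero : ∏ i, M (σ i) i = 0
  · exact hzero ▸ zero_mem _
  · have hle (i : ι) : d i ≤ d' (σ i) :=
      hM.le_of_ne_zero fun h => hzero (Finset.prod_eq_zero (Finset.mem_univ i) h)
    have hdeg : ∑ i, (d' (σ i) - d i) = ∑ i, d' i - ∑ i, d i := by
      rw [Finset.sum_tsub_distrib _ fun i _ => hle i, Equiv.sum_comp σ d']
    exact hdeg ▸ SetLike.prod_mem_graded 𝒜 _ _ fun i _ => hM.mem (σ i) i

lemma span_range_ne_top_of_pos_degree [Nontrivial A] (hF : ∀ j, F j ∈ 𝒜 (d j))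
    (hd : ∀ j, 0 < d j) : Ideal.span (Set.range F) ≠ ⊤ := by
  have hker : Ideal.span (Set.range F) ≤ RingHom.ker (GradedRing.projZeroRingHom 𝒜) := by
    rw [Ideal.span_le, Set.range_subset_iff]
    exact fun j => DirectSum.decompose_of_mem_ne 𝒜 (hF j) (hd j).ne'
  exact fun h => RingHom.ker_ne_top _ (top_le_iff.1 (h ▸ hker))

lemma isUnit_of_mem_zero (h𝒜 : IsField (𝒜 0)) {a : A} (ha : a ∈ 𝒜 0) (hne : a ≠ 0) :
    IsUnit a := by
  obtain ⟨b, hb⟩ := h𝒜.mul_inv_cancel (a := ⟨a, ha⟩) fun h => hne (congrArg Subtype.val h)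
  exact IsUnit.of_mul_eq_one (b : A) (congrArg Subtype.val hb)

lemma exists_perm_degree_le [IsNoetherianRing A] [Fintype ι] {F F' : ι → A} {d : ι → ℕ}
    (hF : ∀ i, F i ∈ 𝒜 (d i)) (hF' : ∀ i, F' i ∈ 𝒜 (d' i)) (htop : Ideal.span (Set.range F) ≠ ⊤)
    (hle : Ideal.span (Set.range F') ≤ Ideal.span (Set.range F))
    (hht : (Fintype.card ι : ℕ∞) ≤ (Ideal.span (Set.range F')).height) :
    ∃ σ : Equiv.Perm ι, ∀ i, d (σ i) ≤ d' i := by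
  classical
  obtain ⟨M, hM, rfl⟩ := exists_isHomogeneousMatrix_mulVec_eq hF hF' hle
  let N (i : ι) : Finset ι := {j | d j ≤ d' i}
  have hall (s : Finset ι) : s.card ≤ (s.biUnion N).card :=
    card_le_card_of_mem_span_image_union_image_compl htop hle hht fun i hi =>
      hM.mulVec_mem fun j hj => Ideal.subset_span <| Or.inl
        ⟨j, Finset.mem_coe.2 (Finset.mem_biUnion.2 ⟨i, hi, by simpa [N] using hj⟩), rfl⟩
  obtain ⟨σ, hσ, hσN⟩ := (Finset.all_card_le_biUnion_card_iff_exists_injective N).1 hall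
  exact ⟨Equiv.ofBijective σ (Finite.injective_iff_bijective.1 hσ), fun i => by
    simpa [N] using hσN i⟩

lemma IsHomogeneousMatrix.exists_vecMul_apply_eq_zero [Fintype ι] [DecidableEq ι] {d : ι → ℕ}
    {M : Matrix ι ι A} (h𝒜 : IsField (𝒜 0)) (hM : IsHomogeneousMatrix 𝒜 d d M)
    (hdet : M.det = 0) :
    ∃ v : ι → A, ∃ i₀, IsUnit (v i₀) ∧ ∀ j, d i₀ ≤ d j → M.vecMul v j = 0 := by
  have := h𝒜.isDomain
  let π := GradedRing.projZeroRingHom' 𝒜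
  have hdet₀ : (M.map π).det = 0 := by
    rw [← RingHom.mapMatrix_apply, ← RingHom.map_det, hdet, map_zero]
  obtain ⟨v, hv, hvM⟩ := Matrix.exists_vecMul_eq_zero_iff.2 hdet₀
  obtain ⟨i₁, hi₁⟩ := Function.ne_iff.1 hv
  obtain ⟨i₀, hi₀, hmax⟩ := Set.exists_max_image {i | v i ≠ 0} d (Set.toFinite _) ⟨i₁, hi₁⟩
  refine ⟨fun i => v i, i₀, isUnit_of_mem_zero h𝒜 (v i₀).2 fun h => hi₀ (Subtype.ext h),
    fun j hj => ?_⟩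
  have hentry (i : ι) : (v i : A) * M i j = (v i * π (M i j) : 𝒜 0) := by
    by_cases hvi : v i = 0
    · simp [hvi]
    · have hMij : M i j ∈ 𝒜 0 := Nat.sub_eq_zero_of_le ((hmax i hvi).trans hj) ▸ hM.mem i j
      exact congrArg (_ * ·) (DirectSum.decompose_of_mem_same 𝒜 hMij).symm
  calc ∑ i, (v i : A) * M i j = (((M.map π).vecMul v j : 𝒜 0) : A) := by
        simp only [hentry, Matrix.vecMul, dotProduct, Matrix.map_apply,
          AddSubmonoidClass.coe_finsetSum]
    _ = 0 := by rw [hvM]; rfl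

lemma IsHomogeneousMatrix.det_ne_zero [IsNoetherianRing A] [Fintype ι] [DecidableEq ι] {F : ι → A}
    {d : ι → ℕ} {M : Matrix ι ι A} (h𝒜 : IsField (𝒜 0)) (hM : IsHomogeneousMatrix 𝒜 d d M)
    (htop : Ideal.span (Set.range F) ≠ ⊤)
    (hle : Ideal.span (Set.range (M.mulVec F)) ≤ Ideal.span (Set.range F))
    (hht : (Fintype.card ι : ℕ∞) ≤ (Ideal.span (Set.range (M.mulVec F))).height) :
    M.det ≠ 0 := by
  intro hdet
  obtain ⟨v, i₀, hv, hvM⟩ := hM.exists_vecMul_apply_eq_zero h𝒜 hdet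
  let t : Finset ι := {j | d j < d i₀}
  let J := Ideal.span (F '' t ∪ M.mulVec F '' (↑(insert i₀ t))ᶜ)
  have hFJ {j : ι} (hj : d j < d i₀) : F j ∈ J :=
    Ideal.subset_span (Or.inl ⟨j, by simpa [t] using hj, rfl⟩)
  have hF'J {i : ι} (hi : i ≠ i₀) : M.mulVec F i ∈ J := by
    by_cases hlt : d i < d i₀
    · exact hM.mulVec_mem fun j hj => hFJ (hj.trans_lt hlt)
    · exact Ideal.subset_span (Or.inr ⟨i, by simp [t, hi, hlt], rfl⟩)
  have hcomb : ∑ i, v i * M.mulVec F i ∈ J := by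
    change v ⬝ᵥ M.mulVec F ∈ J
    rw [Matrix.dotProduct_mulVec]
    refine Ideal.sum_mem _ fun j _ => ?_
    rcases lt_or_ge (d j) (d i₀) with hj | hj
    · exact J.mul_mem_left _ (hFJ hj)
    · simp [hvM j hj]
  have hi₀ : M.mulVec F i₀ ∈ J := by
    rw [← Finset.add_sum_erase _ _ (Finset.mem_univ i₀)] at hcomb
    refine (J.unit_mul_mem_iff_mem hv).1 ((Ideal.add_mem_iff_left J ?_).1 hcomb)
    exact Ideal.sum_mem _ fun i hi => J.mul_mem_left _ (hF'J (Finset.ne_of_mem_erase hi))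
  have hcard : (insert i₀ t).card ≤ t.card :=
    card_le_card_of_mem_span_image_union_image_compl htop hle hht fun i _ => by
      rcases eq_or_ne i i₀ with rfl | hi
      exacts [hi₀, hF'J hi]
  simp [t] at hcard

lemma span_range_eq_of_same_degrees [IsNoetherianRing A] [Fintype ι] {F F' : ι → A} {d : ι → ℕ}
    (h𝒜 : IsField (𝒜 0)) (hF : ∀ i, F i ∈ 𝒜 (d i)) (hF' : ∀ i, F' i ∈ 𝒜 (d i))
    (htop : Ideal.span (Set.range F) ≠ ⊤)
    (hle : Ideal.span (Set.range F') ≤ Ideal.span (Set.range F))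
    (hht : (Fintype.card ι : ℕ∞) ≤ (Ideal.span (Set.range F')).height) :
    Ideal.span (Set.range F') = Ideal.span (Set.range F) := by
  classical
  obtain ⟨M, hM, rfl⟩ := exists_isHomogeneousMatrix_mulVec_eq hF hF' hle
  have hdet : M.det ∈ 𝒜 0 := by simpa only [tsub_self] using hM.det_mem
  have hunit := isUnit_of_mem_zero h𝒜 hdet (hM.det_ne_zero h𝒜 htop hle hht)
  exact hle.antisymm (span_range_le_span_range_mulVec hunit F)

theorem stmt_7_general [IsNoetherianRing A] [Fintype ι] {F F' : ι → A} {d d' : ι → ℕ}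
    (h𝒜 : IsField (𝒜 0)) (hF : ∀ i, F i ∈ 𝒜 (d i)) (hF' : ∀ i, F' i ∈ 𝒜 (d' i))
    (hd : ∀ i, 0 < d i) (hle : Ideal.span (Set.range F') ≤ Ideal.span (Set.range F))
    (hht : (Fintype.card ι : ℕ∞) ≤ (Ideal.span (Set.range F')).height)
    (hprod : ∏ i, d' i ≤ ∏ i, d i) :
    Ideal.span (Set.range F') = Ideal.span (Set.range F) := by
  have : Nontrivial (𝒜 0) := h𝒜.nontrivial
  have : Nontrivial A := Subtype.val_injective (p := (· ∈ 𝒜 0)).nontrivial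
  have htop := span_range_ne_top_of_pos_degree hF hd
  obtain ⟨σ, hσ⟩ := exists_perm_degree_le hF hF' htop hle hht
  have hdeg : (fun i => d (σ i)) = d' :=
    eq_of_le_of_prod_le (fun i => hd (σ i)) hσ (by rwa [Equiv.prod_comp σ d])
  subst hdeg
  have hrange : Set.range (F ∘ σ) = Set.range F := σ.surjective.range_comp F
  rw [← hrange] at hle htop ⊢
  exact span_range_eq_of_same_degrees h𝒜 (fun i => hF (σ i)) hF' htop hle hht

end Graded

attribute [local instance] MvPolynomial.gradedAlgebra

lemma isField_homogeneousSubmodule_zero (σ K : Type*) [Field K] :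
    IsField (homogeneousSubmodule σ K 0) where
  exists_pair_ne := ⟨0, 1, fun h => zero_ne_one (congrArg Subtype.val h)⟩
  mul_comm := mul_comm
  mul_inv_cancel := by
    rintro ⟨a, ha⟩ hne
    rw [homogeneousSubmodule_zero, Submodule.mem_one] at ha
    obtain ⟨c, rfl⟩ := ha
    have hc : c ≠ 0 := by
      rintro rfl
      exact hne (Subtype.ext (map_zero _))
    refine ⟨⟨C c⁻¹, isHomogeneous_C σ _⟩, Subtype.ext ?_⟩
    change C c * C c⁻¹ = (1 : MvPolynomial σ K)
    rw [← C_mul, mul_inv_cancel₀ hc, C_1]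

/-- A height-three complete intersection contained in another one of the same degree is
equal to it. -/
theorem stmt_7 (f g h f' g' h' : MvPolynomial (Fin (n+1)) k)
    (df dg dh df' dg' dh' : ℕ)
    (hdf : 0 < df) (hdg : 0 < dg) (hdh : 0 < dh)
    (hdf' : 0 < df') (hdg' : 0 < dg') (hdh' : 0 < dh')
    (hfhom : MvPolynomial.IsHomogeneous f df) (hghom : MvPolynomial.IsHomogeneous g dg)
    (hhhom : MvPolynomial.IsHomogeneous h dh)
    (hfhom' : MvPolynomial.IsHomogeneous f' df') (hghom' : MvPolynomial.IsHomogeneous g' dg')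
    (hhhom' : MvPolynomial.IsHomogeneous h' dh')
    (hreg : RingTheory.Sequence.IsRegular (MvPolynomial (Fin (n+1)) k) [f, g, h])
    (hreg' : RingTheory.Sequence.IsRegular (MvPolynomial (Fin (n+1)) k) [f', g', h'])
    (hsub : Ideal.span {f', g', h'} ≤ (Ideal.span {f, g, h} : Ideal (MvPolynomial (Fin (n+1)) k)))
    (hdeg : df' * dg' * dh' = df * dg * dh) :
    Ideal.span {f', g', h'} = (Ideal.span {f, g, h} : Ideal (MvPolynomial (Fin (n+1)) k)) := by
  have hrange (a b c : MvPolynomial (Fin (n+1)) k) : {a, b, c} = Set.range ![a, b, c] := by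
    simp only [Matrix.range_cons, Matrix.range_empty, Set.union_empty, Set.singleton_union]
  have hht : (3 : ℕ∞) ≤ (Ideal.span {f', g', h'}).height := by
    have hlist : Ideal.ofList [f', g', h'] = Ideal.span {f', g', h'} := by
      simp only [Ideal.ofList, List.mem_cons, List.not_mem_nil, or_false]; rfl
    exact hlist ▸ length_le_height_ofList hreg'.toIsWeaklyRegular
  simp only [hrange] at hsub hht ⊢
  exact stmt_7_general (d := ![df, dg, dh]) (d' := ![df', dg', dh'])
    (isField_homogeneousSubmodule_zero (Fin (n+1)) k)
    (by simp [Fin.forall_fin_succ, *]) (by simp [Fin.forall_fin_succ, *])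
    (by simp [Fin.forall_fin_succ, *]) hsub hht (by simpa [Fin.prod_univ_three] using hdeg.le)

end
end
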